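/- There exist ε₀ ∈ (0, π/6) and a constant c > 0 such that for every ε ∈ (0, ε₀), every r₀ ∈ (1, √2), every pair of potentials v₂, v₃ satisfying assumptions (i₂)–(iii₂) and (i₃)–(iv₃), every integer n ≥ 1, and every configuration C_n of n distinct points in ℝ² minimizing the energy F among all n-point configurations, there is a rigid motion (isometry) R of ℝ² such that #(R(C_n) Δ S_n) ≤ c·n^{3/4}, where S_n = ([1, ⌈√n⌉] × [1, ⌈√n⌉]) ∩ ℤ² and Δ denotes symmetric difference. -/

import Mathlib

open scoped Real

noncomputable section

abbrev Pt : Type := EuclideanSpace ℝ (Fin 2)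

/-- The clockwise angle in `[0, 2π)` between the vectors `u` and `v`. -/
noncomputable def cwAngle (u v : Pt) : ℝ :=
  let a := Complex.arg ((⟨u 0, u 1⟩ : ℂ) * (starRingEnd ℂ) (⟨v 0, v 1⟩ : ℂ))
  if a < 0 then a + 2 * π else a

/-- Assumptions (i₂)–(iii₂) on the two-body potential. -/
structure V2Hyp (ε r0 : ℝ) (v2 : ℝ → EReal) : Prop where
  eq_neg_one : v2 1 = -1
  ge_neg_one : ∀ r : ℝ, 0 ≤ r → -1 ≤ v2 r
  gt_neg_one : ∀ r : ℝ, 0 ≤ r → r ≠ 1 → -1 < v2 r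
  eq_zero : ∀ r : ℝ, r0 ≤ r → v2 r = 0
  repulsive : ∀ r : ℝ, 0 ≤ r → r ≤ 1 - ε → ((ε⁻¹ : ℝ) : EReal) < v2 r

/-- Assumptions (i₃)–(iv₃) on the three-body potential. -/
structure V3Hyp (ε : ℝ) (v3 : ℝ → ℝ) : Prop where
  symm : ∀ θ : ℝ, 0 ≤ θ → θ ≤ 2 * π → v3 θ = v3 (2 * π - θ)
  zero_pi_half : v3 (π / 2) = 0
  zero_pi : v3 π = 0
  zero_three_pi_half : v3 (3 * π / 2) = 0
  pos : ∀ θ : ℝ, 0 ≤ θ → θ ≤ 2 * π → θ ∉ ({π / 2, π, 3 * π / 2} : Set ℝ) → 0 < v3 θ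
  slope : ∀ θ ∈ Set.Icc (π - ε) (π + ε), 4 * (π / 6 - ε)⁻¹ * |θ - π| ≤ v3 θ
  slope_eq : ∀ θ ∈ Set.Icc (π - ε) (π + ε), v3 θ = 4 * (π / 6 - ε)⁻¹ * |θ - π| → θ = π
  large : ∀ θ : ℝ, 0 ≤ θ → θ ≤ 2 * π →
    θ ∉ Set.Icc (π / 2 - ε) (π / 2 + ε) ∪ Set.Icc (π - ε) (π + ε) ∪
        Set.Icc (3 * π / 2 - ε) (3 * π / 2 + ε) →
    4 / (1 - ε) ^ 2 * (Real.sqrt 2 + 1 / 2) ^ 2 < v3 θ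

/-- The configurational energy `F(C_n)`. -/
noncomputable def energy (r0 : ℝ) (v2 : ℝ → EReal) (v3 : ℝ → ℝ) {n : ℕ}
    (x : Fin n → Pt) : EReal :=
  ((1 / 2 : ℝ) : EReal) *
      ∑ i : Fin n, ∑ j : Fin n, (if j ≠ i then v2 (dist (x i) (x j)) else 0)
    + (((1 / 2 : ℝ) * ∑ i : Fin n, ∑ j : Fin n, ∑ k : Fin n,
        (if i ≠ j ∧ i ≠ k ∧ j ≠ k ∧ dist (x i) (x j) ≤ r0 ∧ dist (x i) (x k) ≤ r0
          then v3 (cwAngle (x j - x i) (x k - x i)) else 0) : ℝ) : EReal)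

/-- `x` is an `n`-point configuration of minimal energy. -/
def IsMinimizer (r0 : ℝ) (v2 : ℝ → EReal) (v3 : ℝ → ℝ) {n : ℕ} (x : Fin n → Pt) : Prop :=
  Function.Injective x ∧
    ∀ y : Fin n → Pt, Function.Injective y → energy r0 v2 v3 x ≤ energy r0 v2 v3 y


open scoped symmDiff

/-- The square `S_n = ([1, ⌈√n⌉] × [1, ⌈√n⌉]) ∩ ℤ²` viewed inside `ℝ²`. -/
def Sn (n : ℕ) : Set Pt :=
  {p | ∃ a b : ℤ, 1 ≤ a ∧ a ≤ ⌈Real.sqrt n⌉ ∧ 1 ≤ b ∧ b ≤ ⌈Real.sqrt n⌉ ∧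
    p 0 = (a : ℝ) ∧ p 1 = (b : ℝ)}

/-!
Every point of a minimizer has its bonds along two almost perpendicular axes. An axis is a line
without orientation, so it is identified with the square of its unit direction. Colour the axes by
the cell of a randomly shifted square grid that contains this square. The bonds that join axes of
equal colour link the `2 * n` axes into `N` monotone chains, so there are `2 * n - N` of them. Each
point is the crossing of two chains, and two chains cross at most once. Three directions are never
pairwise almost perpendicular, hence the graph of crossing chains is triangle-free and Mantel's
theorem gives `n ≤ N ^ 2 / 4`. On average over the shift, the bonds that are lost are paid for by
the energy of the angles, thanks to the slope of `v₃` at `π`. So the energy is at least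
`-(2 * n - ⌈2 * √n⌉)`, with equality only for unit bonds and right angles.

A strip of the square lattice attains this bound. The bonds of a minimizer therefore have unit
length, are parallel to two perpendicular axes, and number at least `2 * n - ⌈2 * √n⌉`. Applied to
two separated parts of a minimizer, the bound on the number of bonds shows that the bonds connect
all points, so that a minimizer is a piece of a square lattice. A row or a column that meets such a
piece costs at least one bond, so the piece lies in a rectangle of semiperimeter at most
`⌈2 * √n⌉` and area at least `n`. Its sides differ from `√n` by `O(n ^ (1 / 4))`.
-/

/-! ### Random square grids -/

section Averaging

open MeasureTheory

lemma monotone_floor_add (α : ℝ) : Monotone fun s : ℝ => (⌊α + s⌋ : ℝ) := fun _ _ h =>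
  Int.cast_le.2 (Int.floor_mono (add_le_add_right h α))

lemma integral_floor_add_sub_floor_add (α β : ℝ) :
    ∫ s in (0 : ℝ)..1, ((⌊β + s⌋ : ℝ) - ⌊α + s⌋) = β - α := by
  have hfract (γ : ℝ) : IntervalIntegrable (fun s => Int.fract (γ + s)) volume 0 1 :=
    (intervalIntegrable_const.add intervalIntegral.intervalIntegrable_id).sub
      (monotone_floor_add γ).intervalIntegrable
  have hshift (γ : ℝ) : ∫ s in (0 : ℝ)..1, Int.fract (γ + s) = ∫ s in (0 : ℝ)..1, Int.fract s := by
    have hper : Function.Periodic (Int.fract : ℝ → ℝ) 1 := Int.fract_add_one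
    rw [intervalIntegral.integral_comp_add_left]
    simpa using hper.intervalIntegral_add_eq γ 0
  have hfloor (s : ℝ) :
      (⌊β + s⌋ : ℝ) - ⌊α + s⌋ = β - α + (Int.fract (α + s) - Int.fract (β + s)) := by
    rw [Int.fract, Int.fract]; ring
  simp_rw [hfloor]
  rw [intervalIntegral.integral_add intervalIntegrable_const ((hfract α).sub (hfract β)),
    intervalIntegral.integral_sub (hfract α) (hfract β), hshift, hshift]
  simp

lemma integral_abs_floor_add_sub_floor_add (α β : ℝ) :
    ∫ s in (0 : ℝ)..1, |(⌊α + s⌋ : ℝ) - ⌊β + s⌋| = |α - β| := by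
  wlog h : α ≤ β generalizing α β
  · simpa only [abs_sub_comm] using this β α (le_of_not_ge h)
  have hmono (s : ℝ) : (⌊α + s⌋ : ℝ) ≤ ⌊β + s⌋ :=
    Int.cast_le.2 (Int.floor_mono (add_le_add_left h s))
  simp_rw [abs_sub_comm (⌊α + _⌋ : ℝ), abs_of_nonneg (sub_nonneg.2 (hmono _)), abs_sub_comm α,
    abs_of_nonneg (sub_nonneg.2 h), integral_floor_add_sub_floor_add]

lemma exists_sum_abs_floor_add_sub_floor_add_le {κ : Type*} (t : Finset κ) (α β : κ → ℝ) :
    ∃ s : ℝ, ∑ k ∈ t, |(⌊α k + s⌋ : ℝ) - ⌊β k + s⌋| ≤ ∑ k ∈ t, |α k - β k| := by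
  have hint (k : κ) :
      IntervalIntegrable (fun s => |(⌊α k + s⌋ : ℝ) - ⌊β k + s⌋|) volume 0 1 :=
    ((monotone_floor_add _).intervalIntegrable.sub (monotone_floor_add _).intervalIntegrable).abs
  have hprob : IsProbabilityMeasure (volume.restrict (Set.Ioc (0 : ℝ) 1)) := ⟨by simp⟩
  obtain ⟨s, hs⟩ := exists_le_integral
    (integrable_finsetSum t fun k _ =>
      (intervalIntegrable_iff_integrableOn_Ioc_of_le zero_le_one).1 (hint k))
  refine ⟨s, hs.trans_eq ?_⟩
  rw [← intervalIntegral.integral_of_le zero_le_one,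
    intervalIntegral.integral_finsetSum fun k _ => hint k]
  exact Finset.sum_congr rfl fun k _ => integral_abs_floor_add_sub_floor_add _ _

end Averaging

lemma abs_re_add_abs_im_le (w : ℂ) : |w.re| + |w.im| ≤ √2 * ‖w‖ := by
  refine abs_le_of_sq_le_sq' ?_ (by positivity) |>.2
  rw [mul_pow, Real.sq_sqrt zero_le_two, Complex.sq_norm, Complex.normSq_apply,
    ← abs_mul_abs_self w.re, ← abs_mul_abs_self w.im]
  linarith [sq_nonneg (|w.re| - |w.im|)]

/-- The cell of the square grid of side `ℓ⁻¹`, shifted by `-ℓ⁻¹ • a`, that contains `w`. -/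
def gridCell (ℓ : ℝ) (a w : ℂ) : ℤ × ℤ := (⌊ℓ * w.re + a.re⌋, ⌊ℓ * w.im + a.im⌋)

lemma norm_sub_le_of_gridCell_eq {ℓ : ℝ} (hℓ : 0 < ℓ) {a v w : ℂ}
    (h : gridCell ℓ a v = gridCell ℓ a w) : ‖v - w‖ ≤ √2 / ℓ := by
  obtain ⟨hre, him⟩ := Prod.mk.inj h
  replace hre := (Int.abs_sub_lt_one_of_floor_eq_floor hre).le
  replace him := (Int.abs_sub_lt_one_of_floor_eq_floor him).le
  rw [add_sub_add_right_eq_sub, ← mul_sub, abs_mul, abs_of_pos hℓ, mul_comm, ← le_div_iff₀ hℓ]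
    at hre him
  calc ‖v - w‖ ≤ √2 * max |(v - w).re| |(v - w).im| := Complex.norm_le_sqrt_two_mul_max _
    _ ≤ √2 * (1 / ℓ) := by gcongr; exact max_le hre him
    _ = √2 / ℓ := mul_one_div _ _

lemma ite_ne_le_abs_sub_add_abs_sub (p q : ℤ × ℤ) :
    (if p ≠ q then 1 else 0 : ℝ) ≤ |(p.1 : ℝ) - q.1| + |(p.2 : ℝ) - q.2| := by
  split_ifs with h
  · have one_le {m n : ℤ} (hmn : m ≠ n) : (1 : ℝ) ≤ |(m : ℝ) - n| := by
      exact_mod_cast Int.one_le_abs (sub_ne_zero.2 hmn)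
    rcases not_and_or.1 (mt Prod.ext_iff.2 h) with h | h
    · exact le_add_of_le_of_nonneg (one_le h) (abs_nonneg _)
    · exact le_add_of_nonneg_of_le (abs_nonneg _) (one_le h)
  · positivity

/-- A random shift of the grid separates two points with probability at most `√2 * ℓ` times their
distance, so some shift does at least as well as the average. -/
lemma exists_card_gridCell_ne_le {κ : Type*} {ℓ : ℝ} (hℓ : 0 < ℓ) (t : Finset κ) (v w : κ → ℂ) :
    ∃ a : ℂ, ((t.filter fun k => gridCell ℓ a (v k) ≠ gridCell ℓ a (w k)).card : ℝ) ≤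
      √2 * ℓ * ∑ k ∈ t, ‖v k - w k‖ := by
  obtain ⟨s, hs⟩ := exists_sum_abs_floor_add_sub_floor_add_le t
    (fun k => ℓ * (v k).re) (fun k => ℓ * (w k).re)
  obtain ⟨s', hs'⟩ := exists_sum_abs_floor_add_sub_floor_add_le t
    (fun k => ℓ * (v k).im) (fun k => ℓ * (w k).im)
  refine ⟨⟨s, s'⟩, ?_⟩
  rw [Finset.card_filter, Nat.cast_sum]
  push_cast
  calc _ ≤ ∑ k ∈ t, (|(⌊ℓ * (v k).re + s⌋ : ℝ) - ⌊ℓ * (w k).re + s⌋| +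
          |(⌊ℓ * (v k).im + s'⌋ : ℝ) - ⌊ℓ * (w k).im + s'⌋|) :=
        Finset.sum_le_sum fun k _ => ite_ne_le_abs_sub_add_abs_sub _ _
    _ ≤ ∑ k ∈ t, (|ℓ * (v k).re - ℓ * (w k).re| + |ℓ * (v k).im - ℓ * (w k).im|) := by
        simpa only [Finset.sum_add_distrib] using add_le_add hs hs'
    _ ≤ ∑ k ∈ t, √2 * ℓ * ‖v k - w k‖ := Finset.sum_le_sum fun k _ => by
        have := abs_re_add_abs_im_le (v k - w k)
        rw [← mul_sub, ← mul_sub, abs_mul, abs_mul, abs_of_pos hℓ, ← mul_add]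
        calc _ ≤ ℓ * (√2 * ‖v k - w k‖) := by gcongr; exact this
          _ = _ := by ring
    _ = _ := (Finset.mul_sum ..).symm

/-! ### Directions in the plane -/

section Directions

variable {u v w : ℂ}

lemma real_inner_eq_re_mul_re_add_im_mul_im (u v : ℂ) :
    inner ℝ u v = u.re * v.re + u.im * v.im := by
  simp only [Complex.inner, Complex.mul_re, Complex.conj_re, Complex.conj_im]
  ring

lemma norm_add_sq_of_norm_eq_one (hu : ‖u‖ = 1) (hv : ‖v‖ = 1) :
    ‖u + v‖ ^ 2 = 2 + 2 * inner ℝ u v := by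
  rw [norm_add_sq_real, hu, hv]; ring

lemma norm_sub_sq_of_norm_eq_one (hu : ‖u‖ = 1) (hv : ‖v‖ = 1) :
    ‖u - v‖ ^ 2 = 2 - 2 * inner ℝ u v := by
  rw [norm_sub_sq_real, hu, hv]; ring

lemma norm_sq_sub_sq_sq (hu : ‖u‖ = 1) (hv : ‖v‖ = 1) :
    ‖u ^ 2 - v ^ 2‖ ^ 2 = 4 * (1 - inner ℝ u v ^ 2) := by
  rw [sq_sub_sq, norm_mul, mul_pow, norm_add_sq_of_norm_eq_one hu hv,
    norm_sub_sq_of_norm_eq_one hu hv]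
  ring

lemma norm_sq_add_sq (hu : ‖u‖ = 1) (hv : ‖v‖ = 1) :
    ‖u ^ 2 + v ^ 2‖ = 2 * |inner ℝ u v| := by
  have hparallelogram := parallelogram_law_with_norm ℝ (u ^ 2) (v ^ 2)
  simp only [norm_pow, hu, hv] at hparallelogram
  rw [← sq_eq_sq₀ (norm_nonneg _) (by positivity), mul_pow, sq_abs]
  linarith [norm_sq_sub_sq_sq hu hv]

lemma norm_sq_sub_sq_le (hu : ‖u‖ = 1) (hv : ‖v‖ = 1) : ‖u ^ 2 - v ^ 2‖ ≤ 2 * ‖u + v‖ := by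
  have := norm_sub_le u v
  rw [sq_sub_sq, norm_mul, mul_comm]
  gcongr
  linarith

lemma inner_I_mul_self (u : ℂ) : inner ℝ u (Complex.I * u) = 0 := by
  simp [mul_comm]

/-- Unit vectors at an angle close to `±π / 2`; the tolerance accommodates the windows of
half-width `ε < 1 / 100` in the assumptions on the three-body potential. -/
def AlmostPerp (u v : ℂ) : Prop := |inner ℝ u v| ≤ 1 / 100

/-- Unit vectors at an angle close to `π`, with the same tolerance as in `AlmostPerp`. -/
def AlmostOpposite (u v : ℂ) : Prop := ‖u + v‖ ≤ 1 / 100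

lemma AlmostPerp.symm (h : AlmostPerp u v) : AlmostPerp v u := by
  rwa [AlmostPerp, real_inner_comm]

lemma AlmostPerp.norm_sq_add_sq_le (h : AlmostPerp u v) (hu : ‖u‖ = 1) (hv : ‖v‖ = 1) :
    ‖u ^ 2 + v ^ 2‖ ≤ 1 / 50 := by
  rw [AlmostPerp] at h
  linarith [norm_sq_add_sq hu hv]

lemma AlmostOpposite.norm_sq_sub_sq_le (h : AlmostOpposite u v) (hu : ‖u‖ = 1) (hv : ‖v‖ = 1) :
    ‖u ^ 2 - v ^ 2‖ ≤ 1 / 50 := by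
  rw [AlmostOpposite] at h
  linarith [_root_.norm_sq_sub_sq_le hu hv]

lemma AlmostPerp.inner_le (h : AlmostPerp u v) : inner ℝ u v ≤ 1 / 100 := (abs_le.1 h).2

lemma not_almostPerp_of_almostOpposite (hu : ‖u‖ = 1) (hv : ‖v‖ = 1) (huw : AlmostOpposite u w)
    (hvw : AlmostOpposite v w) : ¬ AlmostPerp u v := fun h => by
  have hsub : ‖u - v‖ ≤ 1 / 50 := by
    have := norm_sub_le_of_le huw hvw
    rw [add_sub_add_right_eq_sub] at this
    linarith
  have := pow_le_pow_left₀ (norm_nonneg _) hsub 2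
  rw [norm_sub_sq_of_norm_eq_one hu hv] at this
  linarith [h.inner_le]

lemma not_almostPerp_three (hu : ‖u‖ = 1) (hv : ‖v‖ = 1) (hw : ‖w‖ = 1) (huv : AlmostPerp u v)
    (huw : AlmostPerp u w) : ¬ AlmostPerp v w := fun hvw => by
  have h : ‖(u ^ 2 + v ^ 2) + (u ^ 2 + w ^ 2) - (v ^ 2 + w ^ 2)‖ = 2 := by
    rw [show (u ^ 2 + v ^ 2) + (u ^ 2 + w ^ 2) - (v ^ 2 + w ^ 2) = 2 * u ^ 2 by ring]
    simp [hu]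
  have := norm_sub_le_of_le (norm_add_le_of_le (huv.norm_sq_add_sq_le hu hv)
    (huw.norm_sq_add_sq_le hu hw)) (hvw.norm_sq_add_sq_le hv hw)
  linarith

lemma not_almostOpposite_three (hu : ‖u‖ = 1) (huv : AlmostOpposite u v)
    (huw : AlmostOpposite u w) : ¬ AlmostOpposite v w := fun hvw => by
  have h : ‖(u + v) + (u + w) - (v + w)‖ = 2 := by
    rw [show (u + v) + (u + w) - (v + w) = 2 * u by ring]
    simp [hu]
  have := norm_sub_le_of_le (norm_add_le_of_le huv huw) hvw
  linarith

lemma exists_axes {κ : Type*} {S : Set κ} {e : κ → ℂ} (he : ∀ j ∈ S, ‖e j‖ = 1)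
    (hS : S.Pairwise fun j k => AlmostPerp (e j) (e k) ∨ AlmostOpposite (e j) (e k)) :
    ∃ (a : Bool → ℂ) (s : κ → Bool), (∀ b, ‖a b‖ = 1) ∧ AlmostPerp (a false) (a true) ∧
      (S.Pairwise fun j k => s j = s k → AlmostOpposite (e j) (e k)) ∧
      ∀ j ∈ S, ∃ k ∈ S, s k = s j ∧ e k = a (s j) := by
  classical
  have perp_I (u : ℂ) : AlmostPerp u (Complex.I * u) := by
    rw [AlmostPerp, inner_I_mul_self]; norm_num
  rcases S.eq_empty_or_nonempty with rfl | ⟨j₀, hj₀⟩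
  · exact ⟨fun b => cond b (Complex.I * 1) 1, fun _ => false, by simp, perp_I 1, by simp, by simp⟩
  have hself : ¬ AlmostPerp (e j₀) (e j₀) := fun h => by
    have := h.inner_le
    rw [real_inner_self_eq_norm_sq, he j₀ hj₀] at this
    norm_num at this
  obtain ⟨v, hv, hperp, hused⟩ : ∃ v, ‖v‖ = 1 ∧ AlmostPerp (e j₀) v ∧
      ∀ j ∈ S, AlmostPerp (e j₀) (e j) → ∃ k ∈ S, AlmostPerp (e j₀) (e k) ∧ e k = v := by
    by_cases h : ∃ k ∈ S, AlmostPerp (e j₀) (e k)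
    · obtain ⟨k, hk, hperp⟩ := h
      exact ⟨e k, he k hk, hperp, fun _ _ _ => ⟨k, hk, hperp, rfl⟩⟩
    · exact ⟨Complex.I * e j₀, by simp [he j₀ hj₀], perp_I _, fun j hj hj' => (h ⟨j, hj, hj'⟩).elim⟩
  refine ⟨fun b => cond b v (e j₀), fun j => decide (AlmostPerp (e j₀) (e j)), ?_, hperp, ?_, ?_⟩
  · rintro (_ | _)
    exacts [he j₀ hj₀, hv]
  · intro j hj k hk hjk hslot
    have hslot : AlmostPerp (e j₀) (e j) ↔ AlmostPerp (e j₀) (e k) := by simpa using hslot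
    refine (hS hj hk hjk).resolve_left fun hjk' => ?_
    by_cases hj' : AlmostPerp (e j₀) (e j)
    · exact not_almostPerp_three (he _ hj₀) (he _ hj) (he _ hk) hj' (hslot.1 hj') hjk'
    · have hk' := mt hslot.2 hj'
      have hjj₀ : j ≠ j₀ := fun h => hk' (h ▸ hjk')
      have hkj₀ : k ≠ j₀ := fun h => hj' (h ▸ hjk'.symm)
      exact not_almostPerp_of_almostOpposite (he _ hj) (he _ hk)
        ((hS hj hj₀ hjj₀).resolve_left fun h => hj' h.symm)
        ((hS hk hj₀ hkj₀).resolve_left fun h => hk' h.symm) hjk'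
  · intro j hj
    by_cases hj' : AlmostPerp (e j₀) (e j)
    · simpa [hj'] using hused j hj hj'
    · exact ⟨j₀, hj₀, by simp [hj', hself]⟩

lemma card_le_four_of_almostPerp_or_almostOpposite {κ : Type*} {S : Finset κ} {e : κ → ℂ}
    (he : ∀ j ∈ S, ‖e j‖ = 1)
    (hS : (S : Set κ).Pairwise fun j k => AlmostPerp (e j) (e k) ∨ AlmostOpposite (e j) (e k)) :
    S.card ≤ 4 := by
  obtain ⟨-, s, -, -, hs, -⟩ := exists_axes (S := (S : Set κ)) he hS
  have hclass : ∀ b ∈ S.image s, (S.filter fun j => s j = b).card ≤ 2 := by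
    intro b _
    by_contra! h
    obtain ⟨j, k, l, hj, hk, hl, hjk, hjl, hkl⟩ := Finset.two_lt_card_iff.1 h
    simp only [Finset.mem_filter] at hj hk hl
    exact not_almostOpposite_three (he j hj.1) (hs hj.1 hk.1 hjk (hj.2.trans hk.2.symm))
      (hs hj.1 hl.1 hjl (hj.2.trans hl.2.symm)) (hs hk.1 hl.1 hkl (hk.2.trans hl.2.symm))
  have hslots : (S.image s).card ≤ 2 := Finset.card_le_univ _
  linarith [Finset.card_le_mul_card_image S 2 hclass]

end Directions

/-- The unit direction from `z` to `w`; it is `0` when `z = w`. -/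
def dir (z w : ℂ) : ℂ := NormedSpace.normalize (w - z)

lemma norm_dir {z w : ℂ} (h : z ≠ w) : ‖dir z w‖ = 1 :=
  NormedSpace.norm_normalize (sub_ne_zero.2 h.symm)

lemma dir_swap (z w : ℂ) : dir w z = -dir z w := by
  rw [dir, dir, ← NormedSpace.normalize_neg, neg_sub]

lemma inner_sub_eq_norm_mul_inner_dir (z w c : ℂ) :
    inner ℝ (w - z) c = ‖w - z‖ * inner ℝ (dir z w) c := by
  conv_lhs => rw [← NormedSpace.norm_smul_normalize (w - z), real_inner_smul_left]
  rfl

/-! ### Axes and chains -/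

section Chains

variable {ι : Type*} {z : ι → ℂ} {G : SimpleGraph ι} {κ : Type*}

/-- Two almost perpendicular axes `axis (i, false)` and `axis (i, true)` at every vertex `i` of a
bond graph `G` drawn in the plane by `z`. An axis is represented by one of its two unit directions;
as this direction is arbitrary, axes are compared through its square. -/
structure AxisFrame (z : ι → ℂ) (G : SimpleGraph ι) where
  /-- The direction of an axis. -/
  axis : ι × Bool → ℂ
  /-- The axis at `i` to which the bond from `i` to `j` belongs. -/
  slot : ι → ι → Bool
  injective : Function.Injective z
  norm_axis : ∀ p, ‖axis p‖ = 1
  almostPerp_axis : ∀ i, AlmostPerp (axis (i, false)) (axis (i, true))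
  almostOpposite_dir : ∀ {i j k}, G.Adj i j → G.Adj i k → j ≠ k → slot i j = slot i k →
    AlmostOpposite (dir (z i) (z j)) (dir (z i) (z k))
  exists_dir_eq : ∀ {i j}, G.Adj i j →
    ∃ k, G.Adj i k ∧ slot i k = slot i j ∧ dir (z i) (z k) = axis (i, slot i j)

lemma AxisFrame.nonempty (hz : Function.Injective z)
    (hG : ∀ i, (G.neighborSet i).Pairwise fun j k =>
      AlmostPerp (dir (z i) (z j)) (dir (z i) (z k)) ∨
        AlmostOpposite (dir (z i) (z j)) (dir (z i) (z k))) :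
    Nonempty (AxisFrame z G) := by
  choose a s hnorm hperp hopp hdir using fun i =>
    exists_axes (fun j (hj : j ∈ G.neighborSet i) => norm_dir (hz.ne hj.ne)) (hG i)
  exact ⟨⟨fun p => a p.1 p.2, s, hz, fun p => hnorm p.1 p.2, hperp,
    fun hj hk hjk => hopp _ hj hk hjk, fun hj => hdir _ _ hj⟩⟩

namespace AxisFrame

variable {i j : ι}

lemma norm_dir_of_adj (F : AxisFrame z G) (hij : G.Adj i j) : ‖dir (z i) (z j)‖ = 1 :=
  norm_dir (F.injective.ne hij.ne)

variable (F : AxisFrame z G)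

/-- The axis at `i` to which the bond from `i` to `j` belongs, as an index of `AxisFrame.axis`. -/
def bondAxis (i j : ι) : ι × Bool := (i, F.slot i j)

variable {F}

lemma norm_axis_sq_add_axis_sq_le (i : ι) (b : Bool) :
    ‖F.axis (i, b) ^ 2 + F.axis (i, !b) ^ 2‖ ≤ 1 / 50 := by
  have h := (F.almostPerp_axis i).norm_sq_add_sq_le (F.norm_axis _) (F.norm_axis _)
  cases b
  · exact h
  · rwa [add_comm]

lemma norm_dir_sq_sub_axis_sq_le (hij : G.Adj i j) :
    ‖dir (z i) (z j) ^ 2 - F.axis (F.bondAxis i j) ^ 2‖ ≤ 1 / 50 := by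
  obtain ⟨k, hik, hslot, hk⟩ := F.exists_dir_eq hij
  rw [bondAxis, ← hk]
  rcases eq_or_ne j k with rfl | hjk
  · norm_num
  · exact (F.almostOpposite_dir hij hik hjk hslot.symm).norm_sq_sub_sq_le
      (F.norm_dir_of_adj hij) (F.norm_dir_of_adj hik)

end AxisFrame

/-- A colouring of the axes by `κ` such that axes of the same colour are close to each other. The
bound `57 / 100` leaves room for `√2 / (5 / 2)`, the diameter of a cell of `gridCell (5 / 2)`. -/
structure AxisColoring (F : AxisFrame z G) (κ : Type*) where
  /-- The colour of an axis. -/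
  color : ι × Bool → κ
  norm_sub_le : ∀ {p q}, color p = color q → ‖F.axis p ^ 2 - F.axis q ^ 2‖ ≤ 57 / 100

namespace AxisColoring

variable {F : AxisFrame z G} (c : AxisColoring F κ)

/-- The bonds that belong to axes of the same colour at both ends. -/
def keptGraph : SimpleGraph ι where
  Adj i j := G.Adj i j ∧ c.color (F.bondAxis i j) = c.color (F.bondAxis j i)
  symm := ⟨fun _ _ h => ⟨h.1.symm, h.2.symm⟩⟩
  loopless := ⟨fun _ h => h.1.ne rfl⟩

/-- A direction shared by all axes of the colour of `p`. -/
def ref (p : ι × Bool) : ℂ := F.axis (Quotient.mk (Setoid.ker c.color) p).out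

/-- The axis `q` succeeds `p` on a chain: a kept bond leads from `p` to `q` in the direction of
`AxisColoring.ref`. -/
structure Next (p q : ι × Bool) : Prop where
  adj : G.Adj p.1 q.1
  eq_bondAxis : p = F.bondAxis p.1 q.1
  eq_bondAxis' : q = F.bondAxis q.1 p.1
  color_eq : c.color p = c.color q
  inner_pos : 0 < inner ℝ (dir (z p.1) (z q.1)) (c.ref p)

variable {c} {i j k : ι} {b b' b'' : Bool} {p q r : ι × Bool}

lemma norm_ref (p : ι × Bool) : ‖c.ref p‖ = 1 := F.norm_axis _

lemma ref_eq (h : c.color p = c.color q) : c.ref p = c.ref q := by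
  rw [ref, ref, Quotient.sound (s := Setoid.ker c.color) h]

lemma norm_ref_sq_sub_axis_sq_le (p : ι × Bool) :
    ‖c.ref p ^ 2 - F.axis p ^ 2‖ ≤ 57 / 100 :=
  c.norm_sub_le (Quotient.mk_out (s := Setoid.ker c.color) p)

lemma le_abs_inner_dir_ref (hij : G.Adj i j) :
    95 / 100 ≤ |inner ℝ (dir (z i) (z j)) (c.ref (F.bondAxis i j))| := by
  have hclose : ‖dir (z i) (z j) ^ 2 - c.ref (F.bondAxis i j) ^ 2‖ ≤ 59 / 100 := by
    have := norm_sub_le_of_le (F.norm_dir_sq_sub_axis_sq_le hij)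
      (c.norm_ref_sq_sub_axis_sq_le (F.bondAxis i j))
    rw [sub_sub_sub_cancel_right] at this
    linarith
  have := pow_le_pow_left₀ (norm_nonneg _) hclose 2
  rw [norm_sq_sub_sq_sq (F.norm_dir_of_adj hij) (c.norm_ref _)] at this
  refine abs_le_of_sq_le_sq' ?_ (abs_nonneg _) |>.2
  rw [sq_abs]
  linarith

lemma eq_of_inner_pos (hij : G.Adj i j) (hik : G.Adj i k) (hjk : F.bondAxis i j = F.bondAxis i k)
    (hpos : 0 < inner ℝ (dir (z i) (z j)) (c.ref (F.bondAxis i j)) *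
      inner ℝ (dir (z i) (z k)) (c.ref (F.bondAxis i j))) : j = k := by
  by_contra hne
  have hj := c.le_abs_inner_dir_ref hij
  have hsum : |inner ℝ (dir (z i) (z j) + dir (z i) (z k)) (c.ref (F.bondAxis i j))| ≤ 1 / 100 := by
    refine (abs_real_inner_le_norm _ _).trans ?_
    rw [c.norm_ref, mul_one]
    exact F.almostOpposite_dir hij hik hne (Prod.mk.inj hjk).2
  rw [inner_add_left, abs_le] at hsum
  rcases pos_and_pos_or_neg_and_neg_of_mul_pos hpos with ⟨hj', hk'⟩ | ⟨hj', hk'⟩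
  · rw [abs_of_pos hj'] at hj
    linarith
  · rw [abs_of_neg hj'] at hj
    linarith

lemma Next.inner_neg (h : c.Next p q) : inner ℝ (dir (z q.1) (z p.1)) (c.ref q) < 0 := by
  rw [dir_swap, inner_neg_left, ← c.ref_eq h.color_eq]
  exact neg_neg_of_pos h.inner_pos

lemma next_rightUnique : Relator.RightUnique c.Next := fun p q r hq hr => by
  have h : q.1 = r.1 := by
    refine c.eq_of_inner_pos hq.adj hr.adj (hq.eq_bondAxis.symm.trans hr.eq_bondAxis) ?_
    rw [← hq.eq_bondAxis]
    exact mul_pos hq.inner_pos hr.inner_pos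
  rw [hq.eq_bondAxis', hr.eq_bondAxis', h]

lemma next_leftUnique : Relator.LeftUnique c.Next := fun p r q hp hr => by
  have h : p.1 = r.1 := by
    refine c.eq_of_inner_pos hp.adj.symm hr.adj.symm
      (hp.eq_bondAxis'.symm.trans hr.eq_bondAxis') ?_
    rw [← hp.eq_bondAxis']
    exact mul_pos_of_neg_of_neg hp.inner_neg hr.inner_neg
  rw [hp.eq_bondAxis, hr.eq_bondAxis, h]

lemma next_or_next_of_adj (h : c.keptGraph.Adj i j) :
    c.Next (F.bondAxis i j) (F.bondAxis j i) ∨ c.Next (F.bondAxis j i) (F.bondAxis i j) := by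
  obtain ⟨hij, hcolor⟩ := h
  have hle := c.le_abs_inner_dir_ref hij
  rcases lt_or_ge 0 (inner ℝ (dir (z i) (z j)) (c.ref (F.bondAxis i j))) with hpos | hneg
  · exact .inl ⟨hij, rfl, rfl, hcolor, hpos⟩
  · refine .inr ⟨hij.symm, rfl, rfl, hcolor.symm, ?_⟩
    rw [abs_of_nonpos hneg] at hle
    change 0 < inner ℝ (dir (z j) (z i)) _
    rw [dir_swap, inner_neg_left, ← c.ref_eq hcolor]
    linarith

lemma Next.keptGraph_adj (h : c.Next p q) : c.keptGraph.Adj p.1 q.1 := by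
  refine ⟨h.adj, ?_⟩
  rw [← h.eq_bondAxis, ← h.eq_bondAxis']
  exact h.color_eq

lemma color_eq_of_reflTransGen (h : Relation.ReflTransGen c.Next p q) : c.color p = c.color q := by
  induction h with
  | refl => rfl
  | tail _ h ih => exact ih.trans h.color_eq

lemma norm_le_inner_of_reflTransGen (h : Relation.ReflTransGen c.Next p q) :
    95 / 100 * ‖z q.1 - z p.1‖ ≤ inner ℝ (z q.1 - z p.1) (c.ref p) := by
  induction h with
  | refl => simp
  | @tail q r hpq hqr ih =>
    have hstep : 95 / 100 * ‖z r.1 - z q.1‖ ≤ inner ℝ (z r.1 - z q.1) (c.ref p) := by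
      have hle := c.le_abs_inner_dir_ref hqr.adj
      rw [← hqr.eq_bondAxis, abs_of_pos hqr.inner_pos] at hle
      rw [c.ref_eq (c.color_eq_of_reflTransGen hpq), inner_sub_eq_norm_mul_inner_dir, mul_comm]
      gcongr
    have hnorm := norm_add_le (z r.1 - z q.1) (z q.1 - z p.1)
    have hinner := inner_add_left (𝕜 := ℝ) (z r.1 - z q.1) (z q.1 - z p.1) (c.ref p)
    rw [sub_add_sub_cancel] at hnorm hinner
    linarith

lemma not_reflTransGen_of_next (h : c.Next p q) : ¬ Relation.ReflTransGen c.Next q p := fun h' => by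
  have hpq := c.norm_le_inner_of_reflTransGen (.single h)
  have hqp := c.norm_le_inner_of_reflTransGen h'
  rw [← c.ref_eq h.color_eq, ← neg_sub, inner_neg_left, norm_neg] at hqp
  have hpos : 0 < ‖z q.1 - z p.1‖ := norm_sub_pos_iff.2 (F.injective.ne h.adj.ne')
  linarith

lemma norm_ref_sq_add_ref_sq_le (i : ι) (b : Bool) :
    ‖c.ref (i, b) ^ 2 + c.ref (i, !b) ^ 2‖ ≤ 116 / 100 := by
  have := norm_add_le_of_le (norm_add_le_of_le (c.norm_ref_sq_sub_axis_sq_le (i, b))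
    (c.norm_ref_sq_sub_axis_sq_le (i, !b))) (F.norm_axis_sq_add_axis_sq_le i b)
  rw [sub_add_sub_comm, sub_add_cancel] at this
  linarith

lemma color_ne_color_not (i : ι) (b : Bool) : c.color (i, b) ≠ c.color (i, !b) := fun h => by
  have hsum := norm_add_le_of_le (c.norm_sub_le h) (F.norm_axis_sq_add_axis_sq_le i b)
  rw [sub_add_add_cancel, ← two_mul, norm_mul, norm_pow, F.norm_axis] at hsum
  norm_num at hsum

/-- Three directions cannot be pairwise close to perpendicular. -/
lemma not_color_triangle (hij : c.color (i, !b) = c.color (j, b'))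
    (hjk : c.color (j, !b') = c.color (k, b'')) :
    c.color (k, !b'') ≠ c.color (i, b) := fun hki => by
  have hsum := norm_add_le_of_le
    (norm_sub_le_of_le
      (norm_sub_le_of_le (F.norm_axis_sq_add_axis_sq_le i b) (c.norm_sub_le hij))
      (norm_sub_le_of_le (F.norm_axis_sq_add_axis_sq_le j b') (c.norm_sub_le hjk)))
    (norm_sub_le_of_le (F.norm_axis_sq_add_axis_sq_le k b'') (c.norm_sub_le hki))
  ring_nf at hsum
  rw [norm_mul, norm_pow, F.norm_axis] at hsum
  norm_num at hsum

end AxisColoring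

lemma exists_reflTransGen_terminal {α : Type*} [Finite α] {r : α → α → Prop}
    (hr : ∀ {a b}, r a b → ¬ Relation.ReflTransGen r b a) (a : α) :
    ∃ b, Relation.ReflTransGen r a b ∧ ∀ d, ¬ r b d := by
  have hirrefl : Std.Irrefl (Relation.TransGen (Function.swap r)) := ⟨fun b hb => by
    obtain ⟨d, hbd, hdb⟩ := Relation.TransGen.head'_iff.1 (Relation.transGen_swap.1 hb)
    exact hr hbd hdb⟩
  induction a using (Finite.wellFounded_of_trans_of_irrefl
    (Relation.TransGen (Function.swap r))).induction with
  | _ a ih =>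
    by_cases h : ∃ b, r a b
    · obtain ⟨b, hab⟩ := h
      obtain ⟨d, hbd, hd⟩ := ih b (.single hab)
      exact ⟨d, .head hab hbd, hd⟩
    · exact ⟨a, .refl, not_exists.1 h⟩

lemma four_mul_card_edgeFinset_le_sq {V : Type*} [Fintype V] {H : SimpleGraph V}
    [DecidableRel H.Adj] (hH : H.CliqueFree 3) : 4 * H.edgeFinset.card ≤ Fintype.card V ^ 2 := by
  have h := hH.card_edgeFinset_le (r := 2)
  have hmod : (Fintype.card V % 2).choose 2 = 0 :=
    Nat.choose_eq_zero_of_lt (Nat.mod_lt _ two_pos)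
  simp only [hmod] at h
  omega

namespace AxisColoring

variable {F : AxisFrame z G} (c : AxisColoring F κ)

/-- The last axes of the chains; they stand for the chains. -/
def End : Type _ := {p : ι × Bool // ∀ q, ¬ c.Next p q}

section ChainGraph

variable [Finite ι]

/-- The last axis of the chain of `p`. -/
def chainEnd (p : ι × Bool) : c.End :=
  ⟨_, (exists_reflTransGen_terminal c.not_reflTransGen_of_next p).choose_spec.2⟩

variable {c} {i j : ι} {b b' : Bool} {p q : ι × Bool}

lemma reflTransGen_chainEnd (p : ι × Bool) :
    Relation.ReflTransGen c.Next p (c.chainEnd p).1 :=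
  (exists_reflTransGen_terminal c.not_reflTransGen_of_next p).choose_spec.1

lemma color_eq_of_chainEnd_eq (h : c.chainEnd p = c.chainEnd q) : c.color p = c.color q := by
  rw [c.color_eq_of_reflTransGen (c.reflTransGen_chainEnd p), h,
    ← c.color_eq_of_reflTransGen (c.reflTransGen_chainEnd q)]

lemma norm_le_abs_inner_of_chainEnd_eq (h : c.chainEnd p = c.chainEnd q) :
    95 / 100 * ‖z q.1 - z p.1‖ ≤ |inner ℝ (z q.1 - z p.1) (c.ref p)| := by
  have hp := Relation.reflTransGen_swap.2 (c.reflTransGen_chainEnd p)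
  have hq := Relation.reflTransGen_swap.2 (c.reflTransGen_chainEnd q)
  rw [h] at hp
  rcases Relation.ReflTransGen.total_of_right_unique
    (r := Function.swap c.Next) (fun _ _ _ h h' => c.next_leftUnique h h') hp hq with hqp | hpq
  · have := c.norm_le_inner_of_reflTransGen (Relation.reflTransGen_swap.1 hqp)
    rw [← neg_sub, norm_neg, inner_neg_left, c.ref_eq (c.color_eq_of_chainEnd_eq h.symm)] at this
    exact this.trans (neg_le_abs _)
  · exact (c.norm_le_inner_of_reflTransGen (Relation.reflTransGen_swap.1 hpq)).trans (le_abs_self _)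

lemma norm_dir_sq_sub_ref_sq_le (hpq : p.1 ≠ q.1) (h : c.chainEnd p = c.chainEnd q) :
    ‖dir (z p.1) (z q.1) ^ 2 - c.ref p ^ 2‖ ≤ 63 / 100 := by
  have hz := F.injective.ne hpq
  have hle := c.norm_le_abs_inner_of_chainEnd_eq h
  rw [inner_sub_eq_norm_mul_inner_dir, abs_mul, abs_norm, mul_comm] at hle
  have hinner := le_of_mul_le_mul_left hle (norm_sub_pos_iff.2 hz.symm)
  have hsq := pow_le_pow_left₀ (by norm_num) hinner 2
  refine abs_le_of_sq_le_sq' ?_ (by norm_num) |>.2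
  rw [norm_sq_sub_sq_sq (norm_dir hz) (c.norm_ref p)]
  rw [sq_abs] at hsq
  linarith

/-- Different chains meet at most once: the direction between two common points would be close to
the reference directions of both chains, which are far apart. -/
lemma eq_of_chainEnd_eq (h : c.chainEnd (i, b) = c.chainEnd (j, b'))
    (h' : c.chainEnd (i, !b) = c.chainEnd (j, !b')) : i = j := by
  by_contra hij
  have hsub : ‖c.ref (i, b) ^ 2 - c.ref (i, !b) ^ 2‖ ≤ 126 / 100 := by
    have := norm_sub_le_of_le (c.norm_dir_sq_sub_ref_sq_le hij h')
      (c.norm_dir_sq_sub_ref_sq_le hij h)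
    rw [sub_sub_sub_cancel_left] at this
    linarith
  have hparallelogram :=
    parallelogram_law_with_norm ℝ (c.ref (i, b) ^ 2) (c.ref (i, !b) ^ 2)
  simp only [norm_pow, c.norm_ref] at hparallelogram
  nlinarith [norm_nonneg (c.ref (i, b) ^ 2 - c.ref (i, !b) ^ 2),
    norm_nonneg (c.ref (i, b) ^ 2 + c.ref (i, !b) ^ 2), c.norm_ref_sq_add_ref_sq_le i b]

variable (c) in
/-- The graph joining the two chains through each vertex. -/
def chainGraph : SimpleGraph c.End where
  Adj t t' := ∃ i b, c.chainEnd (i, b) = t ∧ c.chainEnd (i, !b) = t'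
  symm := ⟨by
    rintro _ _ ⟨i, b, rfl, rfl⟩
    exact ⟨i, !b, rfl, by rw [Bool.not_not]⟩⟩
  loopless := ⟨by
    rintro _ ⟨i, b, rfl, h⟩
    exact c.color_ne_color_not i b (c.color_eq_of_chainEnd_eq h.symm)⟩

lemma chainGraph_cliqueFree : c.chainGraph.CliqueFree 3 := fun s hs => by
  classical
  obtain ⟨_, _, _, ⟨i, b, hi, hi'⟩, h, ⟨j, b', hj, hj'⟩, -⟩ := SimpleGraph.is3Clique_iff.1 hs
  obtain ⟨k, b'', hk, hk'⟩ := h.symm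
  exact c.not_color_triangle (c.color_eq_of_chainEnd_eq (hi'.trans hj.symm))
    (c.color_eq_of_chainEnd_eq (hj'.trans hk.symm)) (c.color_eq_of_chainEnd_eq (hk'.trans hi.symm))

variable (c) in
lemma four_mul_card_le_card_end_sq [Fintype ι] :
    4 * Fintype.card ι ≤ Nat.card c.End ^ 2 := by
  classical
  have : Fintype c.End := inferInstanceAs (Fintype {p : ι × Bool // ∀ q, ¬ c.Next p q})
  have hmem (i : ι) : s(c.chainEnd (i, false), c.chainEnd (i, true)) ∈ c.chainGraph.edgeFinset := by
    rw [SimpleGraph.mem_edgeFinset]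
    exact ⟨i, false, rfl, rfl⟩
  have hinj : Function.Injective fun i => s(c.chainEnd (i, false), c.chainEnd (i, true)) := by
    intro i j hij
    rcases Sym2.eq_iff.1 hij with ⟨h, h'⟩ | ⟨h, h'⟩
    · exact c.eq_of_chainEnd_eq (b := false) (b' := false) h h'
    · exact c.eq_of_chainEnd_eq (b := false) (b' := true) h h'
  calc 4 * Fintype.card ι ≤ 4 * c.chainGraph.edgeFinset.card := by
        gcongr
        exact Finset.card_le_card_of_injOn _ (fun i _ => hmem i) hinj.injOn
    _ ≤ Nat.card c.End ^ 2 := by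
        rw [Nat.card_eq_fintype_card]
        exact four_mul_card_edgeFinset_le_sq c.chainGraph_cliqueFree

end ChainGraph

/-- A kept bond leads forward along its chain from exactly one of its ends. -/
lemma ncard_edgeSet_keptGraph : c.keptGraph.edgeSet.ncard = {p | ∃ q, c.Next p q}.ncard := by
  symm
  refine Set.ncard_congr (fun p hp => s(p.1, hp.choose.1)) (fun p hp => ?_)
    (fun p q hp hq h => ?_) ?_
  · exact hp.choose_spec.keptGraph_adj
  · have hp' := hp.choose_spec
    have hq' := hq.choose_spec
    rcases Sym2.eq_iff.1 h with ⟨h, h'⟩ | ⟨h, h'⟩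
    · rw [hp'.eq_bondAxis, hq'.eq_bondAxis, h, h']
    · have hpq : p = hq.choose := by rw [hp'.eq_bondAxis, hq'.eq_bondAxis', h, h']
      have hqp : q = hp.choose := by rw [hq'.eq_bondAxis, hp'.eq_bondAxis', h, h']
      rw [← hqp] at hp'
      rw [← hpq] at hq'
      exact (c.not_reflTransGen_of_next hp' (.single hq')).elim
  · have key {i j : ι} (h : c.Next (F.bondAxis i j) (F.bondAxis j i)) :
        ∃ p, ∃ hp : ∃ q, c.Next p q, s(p.1, hp.choose.1) = s(i, j) := by
      refine ⟨_, ⟨_, h⟩, ?_⟩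
      generalize_proofs hp
      rw [c.next_rightUnique hp.choose_spec h]
      rfl
    rintro ⟨i, j⟩ hij
    rcases c.next_or_next_of_adj hij with h | h
    · exact key h
    · obtain ⟨p, hp, hpij⟩ := key h
      exact ⟨p, hp, hpij.trans Sym2.eq_swap⟩

lemma ncard_edgeSet_keptGraph_add_card_end [Fintype ι] :
    c.keptGraph.edgeSet.ncard + Nat.card c.End = 2 * Fintype.card ι := by
  have hcompl : Nat.card c.End = {p | ∃ q, c.Next p q}ᶜ.ncard := by
    simp only [Set.compl_ofPred, not_exists]
    rfl
  rw [c.ncard_edgeSet_keptGraph, hcompl, Set.ncard_add_ncard_compl, Nat.card_eq_fintype_card,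
    Fintype.card_prod, Fintype.card_bool, mul_comm]

end AxisColoring

end Chains

section BondCount

variable {ι : Type*} {z : ι → ℂ} {G : SimpleGraph ι}

lemma sqrt_two_lt : √2 < 142 / 100 := by
  rw [Real.sqrt_lt' (by norm_num)]
  norm_num

namespace AxisFrame

/-- The colouring of the axes by the cells of a shifted square grid. -/
def gridColoring (F : AxisFrame z G) (a : ℂ) : AxisColoring F (ℤ × ℤ) where
  color p := gridCell (5 / 2) a (F.axis p ^ 2)
  norm_sub_le h := (norm_sub_le_of_gridCell_eq (by norm_num) h).trans <| by
    linarith [sqrt_two_lt]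

open Classical in
/-- The angular deviation of the bond from `i` to `j` from its axis at `i`, and `0` if there is no
such bond. -/
def deviation (F : AxisFrame z G) (i j : ι) : ℝ :=
  if G.Adj i j then ‖F.axis (F.bondAxis i j) ^ 2 - dir (z i) (z j) ^ 2‖ else 0

variable {F : AxisFrame z G} {i j : ι}

lemma exists_of_deviation_ne_zero (h : F.deviation i j ≠ 0) :
    ∃ k, G.Adj i k ∧ k ≠ j ∧ F.deviation i k = 0 ∧
      AlmostOpposite (dir (z i) (z k)) (dir (z i) (z j)) ∧
      F.deviation i j = ‖dir (z i) (z k) ^ 2 - dir (z i) (z j) ^ 2‖ := by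
  have hij : G.Adj i j := by
    by_contra hij
    exact h (if_neg hij)
  obtain ⟨k, hik, hslot, hk⟩ := F.exists_dir_eq hij
  have hik' : F.deviation i k = 0 := by simp [deviation, bondAxis, hslot, hk]
  have hkj : k ≠ j := fun hkj => h (hkj ▸ hik')
  refine ⟨k, hik, hkj, hik', F.almostOpposite_dir hik hij hkj hslot, ?_⟩
  rw [hk]
  exact if_pos hij

lemma norm_axis_sq_sub_axis_sq_le (hij : G.Adj i j) :
    ‖F.axis (F.bondAxis i j) ^ 2 - F.axis (F.bondAxis j i) ^ 2‖ ≤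
      F.deviation i j + F.deviation j i := by
  rw [deviation, deviation, if_pos hij, if_pos hij.symm, dir_swap (z i) (z j), neg_sq,
    norm_sub_rev (F.axis (F.bondAxis j i) ^ 2)]
  exact norm_sub_le_norm_sub_add_norm_sub ..

open Classical in
lemma sum_norm_axis_sq_sub_axis_sq_le [Fintype ι] :
    ∑ d : ι × ι with G.Adj d.1 d.2,
        ‖F.axis (F.bondAxis d.1 d.2) ^ 2 - F.axis (F.bondAxis d.2 d.1) ^ 2‖ ≤
      2 * ∑ i, ∑ j, F.deviation i j := by
  calc _ ≤ ∑ i, ∑ j, (F.deviation i j + F.deviation j i) := by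
        rw [Finset.sum_filter, Fintype.sum_prod_type]
        refine Finset.sum_le_sum fun i _ => Finset.sum_le_sum fun j _ => ?_
        split_ifs with hij
        · exact norm_axis_sq_sub_axis_sq_le hij
        · simp [deviation, hij, G.adj_comm j i]
    _ = _ := by
        simp only [Finset.sum_add_distrib]
        rw [Finset.sum_comm (f := fun i j => F.deviation j i), two_mul]

end AxisFrame

lemma two_mul_sum_le_sum_sum [Fintype ι] {A : ι → ι → ℝ} (hA : ∀ j k, 0 ≤ A j k)
    (hsymm : ∀ j k, A j k = A k j) {K : Finset ι} {g : ι → ι} (hg : ∀ k ∈ K, g k ∉ K) :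
    2 * ∑ k ∈ K, A (g k) k ≤ ∑ j, ∑ k, A j k := by
  classical
  rw [two_mul, ← Finset.sum_add_sum_compl K]
  refine add_le_add (Finset.sum_le_sum fun k _ => ?_) ?_
  · rw [hsymm]
    exact Finset.single_le_sum (fun j _ => hA k j) (Finset.mem_univ (g k))
  · rw [Finset.sum_comm]
    calc ∑ k ∈ K, A (g k) k ≤ ∑ k ∈ K, ∑ j ∈ Kᶜ, A j k := Finset.sum_le_sum fun k hk =>
          Finset.single_le_sum (f := fun j => A j k) (fun j _ => hA j k)
            (Finset.mem_compl.2 (hg k hk))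
      _ ≤ ∑ k, ∑ j ∈ Kᶜ, A j k := Finset.sum_le_univ_sum_of_nonneg fun k =>
          Finset.sum_nonneg fun j _ => hA j k

lemma AxisFrame.sum_deviation_le [Fintype ι] (F : AxisFrame z G) {i : ι} {A : ι → ι → ℝ}
    (hA : ∀ j k, 0 ≤ A j k) (hsymm : ∀ j k, A j k = A k j)
    (hslope : ∀ j k, G.Adj i j → G.Adj i k → j ≠ k →
      AlmostOpposite (dir (z i) (z j)) (dir (z i) (z k)) →
      38 / 10 * ‖dir (z i) (z j) ^ 2 - dir (z i) (z k) ^ 2‖ ≤ A j k) :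
    76 / 10 * ∑ j, F.deviation i j ≤ ∑ j, ∑ k, A j k := by
  classical
  have : Nonempty ι := ⟨i⟩
  choose! g hg using fun j (hj : F.deviation i j ≠ 0) => F.exists_of_deviation_ne_zero hj
  have hdev (j : ι) (hj : F.deviation i j ≠ 0) : 38 / 10 * F.deviation i j ≤ A (g j) j := by
    obtain ⟨hik, hkj, -, hopp, heq⟩ := hg j hj
    have hij : G.Adj i j := by
      by_contra hij
      exact hj (if_neg hij)
    exact heq ▸ hslope _ _ hik hij hkj hopp
  calc 76 / 10 * ∑ j, F.deviation i j
      = 2 * ∑ j with F.deviation i j ≠ 0, 38 / 10 * F.deviation i j := by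
        rw [← Finset.mul_sum, Finset.sum_filter_ne_zero]; ring
    _ ≤ 2 * ∑ j with F.deviation i j ≠ 0, A (g j) j := by
        gcongr with j hj
        exact hdev j (Finset.mem_filter.1 hj).2
    _ ≤ ∑ j, ∑ k, A j k := two_mul_sum_le_sum_sum hA hsymm fun j hj => by
        simpa using (hg j (Finset.mem_filter.1 hj).2).2.2.1

lemma AxisColoring.ncard_edgeSet_eq [Finite ι] {κ : Type*} {F : AxisFrame z G}
    (c : AxisColoring F κ) :
    G.edgeSet.ncard = c.keptGraph.edgeSet.ncard + (G \ c.keptGraph).edgeSet.ncard := by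
  have hle : c.keptGraph ≤ G := fun _ _ h => h.1
  rw [SimpleGraph.edgeSet_sdiff, add_comm,
    Set.ncard_sdiff_add_ncard_of_subset (SimpleGraph.edgeSet_subset_edgeSet.2 hle)]

lemma AxisFrame.exists_ncard_edgeSet_sdiff_le [Fintype ι] (F : AxisFrame z G) :
    ∃ a, ((G \ (F.gridColoring a).keptGraph).edgeSet.ncard : ℝ) ≤
      √2 * (5 / 2) * ∑ i, ∑ j, F.deviation i j := by
  classical
  obtain ⟨a, ha⟩ := exists_card_gridCell_ne_le (ℓ := 5 / 2) (by norm_num)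
    (Finset.univ.filter fun d : ι × ι => G.Adj d.1 d.2)
    (fun d => F.axis (F.bondAxis d.1 d.2) ^ 2) (fun d => F.axis (F.bondAxis d.2 d.1) ^ 2)
  refine ⟨a, ?_⟩
  have hcard := (G \ (F.gridColoring a).keptGraph).two_mul_card_edgeFinset
  rw [SimpleGraph.edgeFinset, ← Set.ncard_eq_toFinset_card'] at hcard
  have hfilter : (Finset.univ.filter fun d : ι × ι => G.Adj d.1 d.2).filter (fun d =>
      gridCell (5 / 2) a (F.axis (F.bondAxis d.1 d.2) ^ 2) ≠
        gridCell (5 / 2) a (F.axis (F.bondAxis d.2 d.1) ^ 2)) =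
      Finset.univ.filter fun d : ι × ι => (G \ (F.gridColoring a).keptGraph).Adj d.1 d.2 := by
    ext d
    simp only [AxisColoring.keptGraph, gridColoring, Finset.mem_filter, Finset.mem_univ, true_and,
      SimpleGraph.sdiff_adj]
    tauto
  rw [hfilter] at ha
  have hcard' : 2 * ((G \ (F.gridColoring a).keptGraph).edgeSet.ncard : ℝ) =
      (Finset.univ.filter fun d : ι × ι =>
        (G \ (F.gridColoring a).keptGraph).Adj d.1 d.2).card := by
    exact_mod_cast hcard
  have := mul_le_mul_of_nonneg_left F.sum_norm_axis_sq_sub_axis_sq_le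
    (show 0 ≤ √2 * (5 / 2) by positivity)
  linarith

/-- `N` is the number of chains, and its lower bound `2 * √n` comes from the theorem of Mantel. -/
theorem exists_ncard_edgeSet_add_le [Fintype ι] (hz : Function.Injective z)
    (hG : ∀ i, (G.neighborSet i).Pairwise fun j k =>
      AlmostPerp (dir (z i) (z j)) (dir (z i) (z k)) ∨
        AlmostOpposite (dir (z i) (z j)) (dir (z i) (z k)))
    {A : ι → ι → ι → ℝ} (hA : ∀ i j k, 0 ≤ A i j k) (hsymm : ∀ i j k, A i j k = A i k j)
    (hslope : ∀ i j k, G.Adj i j → G.Adj i k → j ≠ k →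
      AlmostOpposite (dir (z i) (z j)) (dir (z i) (z k)) →
      38 / 10 * ‖dir (z i) (z j) ^ 2 - dir (z i) (z k) ^ 2‖ ≤ A i j k) :
    ∃ N : ℕ, 4 * Fintype.card ι ≤ N ^ 2 ∧
      (G.edgeSet.ncard : ℝ) + N ≤ 2 * Fintype.card ι + 47 / 100 * ∑ i, ∑ j, ∑ k, A i j k := by
  obtain ⟨F⟩ := AxisFrame.nonempty hz hG
  obtain ⟨a, ha⟩ := F.exists_ncard_edgeSet_sdiff_le
  set c := F.gridColoring a
  refine ⟨_, c.four_mul_card_le_card_end_sq, ?_⟩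
  have hdev : 76 / 10 * ∑ i, ∑ j, F.deviation i j ≤ ∑ i, ∑ j, ∑ k, A i j k := by
    rw [Finset.mul_sum]
    exact Finset.sum_le_sum fun i _ => F.sum_deviation_le (hA i) (hsymm i) (hslope i)
  have hpos : 0 ≤ ∑ i, ∑ j, F.deviation i j :=
    Finset.sum_nonneg fun i _ => Finset.sum_nonneg fun j _ => by
      rw [AxisFrame.deviation]; positivity
  have hlost : ((G \ c.keptGraph).edgeSet.ncard : ℝ) ≤ 47 / 100 * ∑ i, ∑ j, ∑ k, A i j k := by
    nlinarith [sqrt_two_lt]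
  have hkept : (c.keptGraph.edgeSet.ncard : ℝ) + Nat.card c.End = 2 * Fintype.card ι := by
    exact_mod_cast c.ncard_edgeSet_keptGraph_add_card_end
  rw [c.ncard_edgeSet_eq]
  push_cast
  linarith

end BondCount

/-! ### Angles -/

/-- The identification of `ℝ²` with the complex plane. -/
def toC : Pt ≃ₗᵢ[ℝ] ℂ := Complex.orthonormalBasisOneI.repr.symm

lemma toC_apply (p : Pt) : toC p = ⟨p 0, p 1⟩ := by
  apply Complex.ext <;> simp [toC, Complex.orthonormalBasisOneI_repr_symm_apply]

lemma norm_toC_sub (p q : Pt) : ‖toC q - toC p‖ = dist p q := by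
  rw [← map_sub, LinearIsometryEquiv.norm_map, dist_comm, dist_eq_norm]

section Angles

variable {ε θ : ℝ} {v3 : ℝ → ℝ} {u v : ℂ}

lemma cwAngle_eq_ite (p q : Pt) :
    cwAngle p q = if (toC p * (starRingEnd ℂ) (toC q)).arg < 0
      then (toC p * (starRingEnd ℂ) (toC q)).arg + 2 * π
      else (toC p * (starRingEnd ℂ) (toC q)).arg := by
  rw [toC_apply, toC_apply, cwAngle]

lemma cwAngle_mem_Icc (p q : Pt) : cwAngle p q ∈ Set.Icc 0 (2 * π) := by
  have hneg := Complex.neg_pi_lt_arg (toC p * (starRingEnd ℂ) (toC q))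
  have hle := Complex.arg_le_pi (toC p * (starRingEnd ℂ) (toC q))
  have hpi := Real.pi_pos
  rw [cwAngle_eq_ite]
  split_ifs <;> constructor <;> linarith

lemma cwAngle_swap (p q : Pt) :
    cwAngle q p = cwAngle p q ∨ cwAngle q p = 2 * π - cwAngle p q := by
  have hconj : toC q * (starRingEnd ℂ) (toC p) =
      (starRingEnd ℂ) (toC p * (starRingEnd ℂ) (toC q)) := by
    rw [map_mul, Complex.conj_conj, mul_comm]
  rw [cwAngle_eq_ite, cwAngle_eq_ite, hconj, Complex.arg_conj]
  set a := (toC p * (starRingEnd ℂ) (toC q)).arg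
  have hpi := Real.pi_pos
  by_cases ha : a = π
  · simp [ha]
  · rcases lt_trichotomy a 0 with h | h | h
    · simp [ha, h, h.not_gt]
    · simp [h, hpi.ne]
    · right
      simp only [ha, if_false, neg_lt_zero, h, if_true, h.not_gt]
      ring

lemma cos_cwAngle_sub {p q r : Pt} (hq : p ≠ q) (hr : p ≠ r) :
    Real.cos (cwAngle (q - p) (r - p)) = inner ℝ (dir (toC p) (toC q)) (dir (toC p) (toC r)) := by
  have hu : toC (q - p) ≠ 0 := by simpa [sub_eq_zero] using hq.symm
  have hv : toC (r - p) ≠ 0 := by simpa [sub_eq_zero] using hr.symm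
  have harg : Real.cos (cwAngle (q - p) (r - p)) =
      Real.cos (toC (q - p) * (starRingEnd ℂ) (toC (r - p))).arg := by
    rw [cwAngle_eq_ite]
    split_ifs
    · exact Real.cos_add_two_pi _
    · rfl
  rw [harg, Complex.cos_arg (mul_ne_zero hu ((map_ne_zero _).2 hv)), norm_mul, RCLike.norm_conj,
    ← Complex.inner, dir, dir, NormedSpace.normalize, NormedSpace.normalize, ← map_sub, ← map_sub,
    real_inner_smul_left, real_inner_smul_right, real_inner_comm, div_eq_inv_mul, mul_inv]
  ring

lemma norm_add_le_abs_sub_pi (hu : ‖u‖ = 1) (hv : ‖v‖ = 1) (hθ : Real.cos θ = inner ℝ u v) :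
    ‖u + v‖ ≤ |θ - π| := by
  have hcos := Real.one_sub_sq_div_two_le_cos (x := θ - π)
  rw [Real.cos_sub_pi] at hcos
  rw [← sq_le_sq₀ (norm_nonneg _) (abs_nonneg _), sq_abs, norm_add_sq_of_norm_eq_one hu hv]
  linarith

lemma abs_cos_le_abs_sub_pi_div_two (θ : ℝ) : |Real.cos θ| ≤ |θ - π / 2| := by
  rw [← Real.sin_pi_div_two_sub, abs_sub_comm]
  exact Real.abs_sin_le_abs

lemma abs_cos_le_abs_sub_three_mul_pi_div_two (θ : ℝ) : |Real.cos θ| ≤ |θ - 3 * π / 2| := by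
  rw [← Real.cos_two_pi_sub, abs_sub_comm]
  convert abs_cos_le_abs_sub_pi_div_two (2 * π - θ) using 2
  ring

lemma cos_eq_zero_or_neg_one_iff (hθ : θ ∈ Set.Icc 0 (2 * π)) :
    Real.cos θ = 0 ∨ Real.cos θ = -1 ↔ θ ∈ ({π / 2, π, 3 * π / 2} : Set ℝ) := by
  have hpi := Real.pi_pos
  constructor
  · rintro (h | h)
    · obtain ⟨k, rfl⟩ := Real.cos_eq_zero_iff.1 h
      have h0 : (-1 : ℝ) < k := by nlinarith [hθ.1]
      have h2 : (k : ℝ) < 2 := by nlinarith [hθ.2]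
      have hk : k = 0 ∨ k = 1 := by
        have : -1 < k := by exact_mod_cast h0
        have : k < 2 := by exact_mod_cast h2
        omega
      rcases hk with rfl | rfl <;> norm_num
    · obtain ⟨k, rfl⟩ := Real.cos_eq_neg_one_iff.1 h
      have h0 : (-1 : ℝ) < k := by nlinarith [hθ.1]
      have h2 : (k : ℝ) < 1 := by nlinarith [hθ.2]
      have hk : k = 0 := by
        have : -1 < k := by exact_mod_cast h0
        have : k < 1 := by exact_mod_cast h2
        omega
      simp [hk]
  · rintro (rfl | rfl | rfl)
    · exact Or.inl Real.cos_pi_div_two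
    · exact Or.inr Real.cos_pi
    · left
      rw [show 3 * π / 2 = π / 2 + π by ring, Real.cos_add_pi, Real.cos_pi_div_two, neg_zero]

namespace V3Hyp

lemma eq_zero_iff (h3 : V3Hyp ε v3) (hθ : θ ∈ Set.Icc 0 (2 * π)) :
    v3 θ = 0 ↔ Real.cos θ = 0 ∨ Real.cos θ = -1 := by
  rw [cos_eq_zero_or_neg_one_iff hθ]
  refine ⟨fun h => by_contra fun h' => (h3.pos θ hθ.1 hθ.2 h').ne' h, ?_⟩
  rintro (rfl | rfl | rfl)
  exacts [h3.zero_pi_half, h3.zero_pi, h3.zero_three_pi_half]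

lemma nonneg (h3 : V3Hyp ε v3) (hθ : θ ∈ Set.Icc 0 (2 * π)) : 0 ≤ v3 θ := by
  by_cases h : θ ∈ ({π / 2, π, 3 * π / 2} : Set ℝ)
  · exact ((h3.eq_zero_iff hθ).2 ((cos_eq_zero_or_neg_one_iff hθ).2 h)).ge
  · exact (h3.pos θ hθ.1 hθ.2 h).le

lemma cwAngle_comm (h3 : V3Hyp ε v3) (p q : Pt) : v3 (cwAngle p q) = v3 (cwAngle q p) := by
  rcases cwAngle_swap p q with h | h
  · rw [h]
  · rw [h, ← h3.symm _ (cwAngle_mem_Icc p q).1 (cwAngle_mem_Icc p q).2]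

lemma cwAngle_sub_eq_zero_iff (h3 : V3Hyp ε v3) {p q r : Pt} (hq : p ≠ q) (hr : p ≠ r) :
    v3 (cwAngle (q - p) (r - p)) = 0 ↔ inner ℝ (dir (toC p) (toC q)) (dir (toC p) (toC r)) = 0 ∨
      dir (toC p) (toC q) + dir (toC p) (toC r) = 0 := by
  rw [h3.eq_zero_iff (cwAngle_mem_Icc _ _), cos_cwAngle_sub hq hr]
  refine or_congr_right ?_
  rw [← norm_eq_zero, ← sq_eq_zero_iff, norm_add_sq_of_norm_eq_one
    (norm_dir (toC.injective.ne hq)) (norm_dir (toC.injective.ne hr))]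
  constructor <;> intro h <;> linarith

lemma fourteen_lt (h3 : V3Hyp ε v3) (hε : 0 < ε) (hε' : ε < 1) (hθ : θ ∈ Set.Icc 0 (2 * π))
    (hwindow : θ ∉ Set.Icc (π / 2 - ε) (π / 2 + ε) ∪ Set.Icc (π - ε) (π + ε) ∪
      Set.Icc (3 * π / 2 - ε) (3 * π / 2 + ε)) : 14 < v3 θ := by
  have hsqrt : (141 / 100 : ℝ) ≤ √2 := Real.le_sqrt_of_sq_le (by norm_num)
  calc (14 : ℝ) ≤ 4 * (√2 + 1 / 2) ^ 2 := by nlinarith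
    _ ≤ 4 / (1 - ε) ^ 2 * (√2 + 1 / 2) ^ 2 := by
        gcongr
        rw [le_div_iff₀ (by nlinarith)]
        nlinarith
    _ < v3 θ := h3.large θ hθ.1 hθ.2 hwindow

lemma almostPerp_or_mem_Icc (h3 : V3Hyp ε v3) (hε : 0 < ε) (hε' : ε < 1 / 100)
    (hθ : θ ∈ Set.Icc 0 (2 * π)) (hcos : Real.cos θ = inner ℝ u v) (h : v3 θ ≤ 14) :
    AlmostPerp u v ∨ θ ∈ Set.Icc (π - ε) (π + ε) := by
  rcases not_imp_comm.1 (h3.fourteen_lt hε (by linarith) hθ) h.not_gt with (hw | hw) | hw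
  · left
    rw [AlmostPerp, ← hcos]
    exact (abs_cos_le_abs_sub_pi_div_two θ).trans <|
      abs_le.2 ⟨by linarith [hw.1], by linarith [hw.2]⟩
  · exact Or.inr hw
  · left
    rw [AlmostPerp, ← hcos]
    exact (abs_cos_le_abs_sub_three_mul_pi_div_two θ).trans <|
      abs_le.2 ⟨by linarith [hw.1], by linarith [hw.2]⟩

lemma almostPerp_or_almostOpposite (h3 : V3Hyp ε v3) (hε : 0 < ε) (hε' : ε < 1 / 100)
    (hu : ‖u‖ = 1) (hv : ‖v‖ = 1) (hθ : θ ∈ Set.Icc 0 (2 * π)) (hcos : Real.cos θ = inner ℝ u v)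
    (h : v3 θ ≤ 14) : AlmostPerp u v ∨ AlmostOpposite u v := by
  refine (h3.almostPerp_or_mem_Icc hε hε' hθ hcos h).imp_right fun hw => ?_
  exact (norm_add_le_abs_sub_pi hu hv hcos).trans <|
    abs_le.2 ⟨by linarith [hw.1], by linarith [hw.2]⟩

lemma norm_sq_sub_sq_le (h3 : V3Hyp ε v3) (hε : 0 < ε) (hε' : ε < 1 / 100) (hu : ‖u‖ = 1)
    (hv : ‖v‖ = 1) (hθ : θ ∈ Set.Icc 0 (2 * π)) (hcos : Real.cos θ = inner ℝ u v)
    (huv : AlmostOpposite u v) (h : v3 θ ≤ 14) : 38 / 10 * ‖u ^ 2 - v ^ 2‖ ≤ v3 θ := by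
  have hperp : ¬ AlmostPerp u v := fun hperp => by
    have hle := pow_le_pow_left₀ (norm_nonneg _) huv 2
    rw [norm_add_sq_of_norm_eq_one hu hv] at hle
    linarith [(abs_le.1 hperp).1]
  have hw := (h3.almostPerp_or_mem_Icc hε hε' hθ hcos h).resolve_left hperp
  have hslope : 76 / 10 ≤ 4 * (π / 6 - ε)⁻¹ := by
    have := Real.pi_lt_d2
    have := Real.pi_gt_three
    rw [← div_eq_mul_inv, le_div_iff₀ (by linarith)]
    linarith
  calc 38 / 10 * ‖u ^ 2 - v ^ 2‖ ≤ 38 / 10 * (2 * |θ - π|) := by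
        gcongr
        refine (_root_.norm_sq_sub_sq_le hu hv).trans ?_
        gcongr
        exact norm_add_le_abs_sub_pi hu hv hcos
    _ = 76 / 10 * |θ - π| := by ring
    _ ≤ 4 * (π / 6 - ε)⁻¹ * |θ - π| := by gcongr
    _ ≤ v3 θ := h3.slope θ hw

end V3Hyp

end Angles

/-! ### The energy of a minimizer -/

section Energy

lemma ereal_coe_sum {ι : Type*} (s : Finset ι) (f : ι → ℝ) :
    ((∑ i ∈ s, f i : ℝ) : EReal) = ∑ i ∈ s, (f i : EReal) :=
  map_sum (⟨⟨Real.toEReal, EReal.coe_zero⟩, EReal.coe_add⟩ : ℝ →+ EReal) f s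

lemma ereal_sum_ne_bot {ι : Type*} {s : Finset ι} {f : ι → EReal} (hf : ∀ i ∈ s, f i ≠ ⊥) :
    ∑ i ∈ s, f i ≠ ⊥ :=
  Finset.sum_induction f (· ≠ ⊥) (fun _ _ ha hb => EReal.add_ne_bot_iff.2 ⟨ha, hb⟩)
    EReal.zero_ne_bot hf

lemma ereal_ne_top_of_sum_ne_top {ι : Type*} {s : Finset ι} {f : ι → EReal}
    (hf : ∀ i ∈ s, f i ≠ ⊥) (h : ∑ i ∈ s, f i ≠ ⊤) {i : ι} (hi : i ∈ s) : f i ≠ ⊤ := by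
  classical
  rw [← Finset.add_sum_erase s f hi] at h
  exact ((EReal.add_ne_top_iff_ne_top₂ (hf i hi)
    (ereal_sum_ne_bot fun j hj => hf j (Finset.mem_of_mem_erase hj))).1 h).1

lemma sum_sum_ite_or_eq {ι : Type*} [Fintype ι] [DecidableEq ι] {f : ι → ι → ℝ}
    (hself : ∀ j, f j j = 0) (hsymm : ∀ j k, f j k = f k j) (i : ι) :
    ∑ j, ∑ k, (if j = i ∨ k = i then 0 else f j k) = ∑ j, ∑ k, f j k - 2 * ∑ k, f i k := by
  have hite : ∀ j k, (if j = i ∨ k = i then 0 else f j k) =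
      f j k - (if j = i then f i k else 0) - (if k = i then f i j else 0) := fun j k => by
    by_cases hj : j = i <;> by_cases hk : k = i <;> simp [hj, hk, hself, hsymm i]
  simp only [hite, Finset.sum_sub_distrib, Finset.sum_ite_eq', Finset.mem_univ, if_true]
  rw [Finset.sum_comm (f := fun j k => if j = i then f i k else 0)]
  simp only [Finset.sum_ite_eq', Finset.mem_univ, if_true]
  ring

lemma sum_sum_sum_ite_or_le {ι : Type*} [Fintype ι] [DecidableEq ι] {A : ι → ι → ι → ℝ}
    (hA : ∀ j k l, 0 ≤ A j k l) (i : ι) :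
    ∑ j, ∑ k, ∑ l, (if j = i ∨ k = i ∨ l = i then 0 else A j k l) ≤
      ∑ j, ∑ k, ∑ l, A j k l - ∑ k, ∑ l, A i k l := by
  rw [← Finset.sum_erase_eq_sub (Finset.mem_univ i), ← Finset.add_sum_erase _ _ (Finset.mem_univ i)]
  simp only [true_or, if_true, Finset.sum_const_zero, zero_add]
  gcongr with j _ k _ l _
  split_ifs
  exacts [hA j k l, le_rfl]

lemma injective_update {α β : Type*} [DecidableEq α] {f : α → β} (hf : Function.Injective f) {b : β}
    (hb : ∀ a, b ≠ f a) (i : α) : Function.Injective (Function.update f i b) := by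
  intro a a' h
  rw [Function.update_apply, Function.update_apply] at h
  split_ifs at h with ha ha' ha'
  exacts [ha.trans ha'.symm, absurd h (hb _), absurd h.symm (hb _), hf h]

/-- A maximal subset of `s` with small entries has at most `m` elements, and every index outside it
contributes a large entry. -/
lemma pairwise_le_of_sum_sum_le {ι : Type*} [Fintype ι] {A : ι → ι → ℝ} (hA : ∀ j k, 0 ≤ A j k)
    (hsymm : ∀ j k, A j k = A k j) {s : Finset ι} {m : ℕ} {c : ℝ} (hc : m + 1 < c)
    (hclique : ∀ t ⊆ s, (t : Set ι).Pairwise (fun j k => A j k ≤ c) → t.card ≤ m)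
    (hsum : ∑ j, ∑ k, A j k ≤ 2 * s.card) : (s : Set ι).Pairwise fun j k => A j k ≤ c := by
  classical
  obtain ⟨t, ht⟩ := (s.powerset.filter fun t : Finset ι =>
    (t : Set ι).Pairwise fun j k => A j k ≤ c).exists_maximal ⟨∅, by simp⟩
  obtain ⟨hts, htc⟩ : t ⊆ s ∧ (t : Set ι).Pairwise fun j k => A j k ≤ c := by simpa using ht.prop
  have hlarge : ∀ k ∈ s \ t, ∃ j ∈ t, c < A j k := fun k hk => by
    obtain ⟨hks, hkt⟩ := Finset.mem_sdiff.1 hk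
    by_contra! hsmall
    refine hkt (ht.le_of_ge (y := insert k t) ?_ (Finset.subset_insert k t) ?_)
    · rw [Finset.mem_filter, Finset.mem_powerset, Finset.coe_insert]
      exact ⟨Finset.insert_subset hks hts, htc.insert fun j hj _ =>
        ⟨(hsymm k j).trans_le (hsmall j hj), hsmall j hj⟩⟩
    · exact Finset.mem_insert_self k t
  choose! g hgt hgc using hlarge
  have htwo := two_mul_sum_le_sum_sum hA hsymm (K := s \ t) (g := g)
    fun k hk hmem => (Finset.mem_sdiff.1 hmem).2 (hgt k hk)
  have hle : ((s \ t).card : ℝ) * c ≤ ∑ k ∈ s \ t, A (g k) k := by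
    rw [← nsmul_eq_mul]
    exact Finset.card_nsmul_le_sum _ _ _ fun k hk => (hgc k hk).le
  have hcard : ((s \ t).card : ℝ) + t.card = s.card := by
    exact_mod_cast Finset.card_sdiff_add_card_eq_card hts
  have htm : (t.card : ℝ) ≤ m := by exact_mod_cast hclique t hts htc
  have hlt : ((s \ t).card : ℝ) < 1 := by
    have : (0 : ℝ) ≤ m := m.cast_nonneg
    by_contra! hge
    nlinarith
  have hempty : s \ t = ∅ := by
    rw [← Finset.card_eq_zero]
    exact Nat.lt_one_iff.1 (by exact_mod_cast hlt)
  exact htc.mono (by exact_mod_cast Finset.sdiff_eq_empty_iff_subset.1 hempty)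

variable {n : ℕ} {ε r0 : ℝ} {v2 : ℝ → EReal} {v3 : ℝ → ℝ} {x y : Fin n → Pt}

/-- The two-body energy of an ordered pair of points, as a real number: it takes the junk value `0`
where the potential is infinite. -/
def pairEnergy (v2 : ℝ → EReal) (x : Fin n → Pt) (i j : Fin n) : ℝ :=
  if j ≠ i then (v2 (dist (x i) (x j))).toReal else 0

/-- The three-body energy of an ordered triple of points, with apex `i`. -/
def angleEnergy (r0 : ℝ) (v3 : ℝ → ℝ) (x : Fin n → Pt) (i j k : Fin n) : ℝ :=
  if i ≠ j ∧ i ≠ k ∧ j ≠ k ∧ dist (x i) (x j) ≤ r0 ∧ dist (x i) (x k) ≤ r0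
    then v3 (cwAngle (x j - x i) (x k - x i)) else 0

/-- The energy as a real number, meaningful for configurations of finite energy. -/
def realEnergy (r0 : ℝ) (v2 : ℝ → EReal) (v3 : ℝ → ℝ) (x : Fin n → Pt) : ℝ :=
  1 / 2 * ∑ i, ∑ j, pairEnergy v2 x i j + 1 / 2 * ∑ i, ∑ j, ∑ k, angleEnergy r0 v3 x i j k

/-- Finiteness of the energy, expressed through the two-body potential: this is the only part of the
energy that can be infinite. -/
def HasFiniteEnergy (v2 : ℝ → EReal) (x : Fin n → Pt) : Prop :=
  ∀ i j, j ≠ i → v2 (dist (x i) (x j)) ≠ ⊤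

/-- The bond graph of a configuration, joining distinct points at distance at most `r0`. -/
def bondGraph (r0 : ℝ) (x : Fin n → Pt) : SimpleGraph (Fin n) where
  Adj i j := i ≠ j ∧ dist (x i) (x j) ≤ r0
  symm := ⟨fun _ _ h => ⟨h.1.symm, by rw [dist_comm]; exact h.2⟩⟩
  loopless := ⟨fun _ h => h.1 rfl⟩

lemma V2Hyp.ne_bot (h2 : V2Hyp ε r0 v2) {r : ℝ} (hr : 0 ≤ r) : v2 r ≠ ⊥ :=
  ((EReal.bot_lt_coe (-1)).trans_le (h2.ge_neg_one r hr)).ne'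

lemma V2Hyp.ite_ne_bot (h2 : V2Hyp ε r0 v2) (i j : Fin n) :
    (if j ≠ i then v2 (dist (x i) (x j)) else 0) ≠ ⊥ := by
  split_ifs
  exacts [h2.ne_bot dist_nonneg, EReal.zero_ne_bot]

lemma HasFiniteEnergy.energy_eq_coe (hx : HasFiniteEnergy v2 x) (h2 : V2Hyp ε r0 v2) :
    energy r0 v2 v3 x = realEnergy r0 v2 v3 x := by
  have hpair : ∀ i j, (if j ≠ i then v2 (dist (x i) (x j)) else 0) =
      ((pairEnergy v2 x i j : ℝ) : EReal) := fun i j => by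
    unfold pairEnergy
    split_ifs with hij
    · rw [EReal.coe_toReal (hx i j hij) (h2.ne_bot dist_nonneg)]
    · rfl
  simp only [energy, hpair, ← ereal_coe_sum]
  rw [realEnergy, EReal.coe_add, EReal.coe_mul]
  rfl

lemma hasFiniteEnergy_of_energy_ne_top (h2 : V2Hyp ε r0 v2) (h : energy r0 v2 v3 x ≠ ⊤) :
    HasFiniteEnergy v2 x := by
  have hsum : ∑ i : Fin n, ∑ j : Fin n, (if j ≠ i then v2 (dist (x i) (x j)) else 0) ≠ ⊤ := by
    refine fun htop => h ?_
    rw [energy, htop, EReal.coe_mul_top_of_pos (by norm_num)]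
    exact EReal.top_add_coe _
  intro i j hij
  have hi := ereal_ne_top_of_sum_ne_top (fun i _ => ereal_sum_ne_bot fun j _ => h2.ite_ne_bot i j)
    hsum (Finset.mem_univ i)
  have hj := ereal_ne_top_of_sum_ne_top (fun j _ => h2.ite_ne_bot i j) hi (Finset.mem_univ j)
  rwa [if_pos hij] at hj

lemma pairEnergy_self (i : Fin n) : pairEnergy v2 x i i = 0 := if_neg (not_not.2 rfl)

lemma pairEnergy_comm (i j : Fin n) : pairEnergy v2 x i j = pairEnergy v2 x j i := by
  rw [pairEnergy, pairEnergy, dist_comm]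
  exact if_congr ne_comm rfl rfl

lemma pairEnergy_eq_zero_of_not_adj (h2 : V2Hyp ε r0 v2) {i j : Fin n}
    (h : ¬ (bondGraph r0 x).Adj i j) : pairEnergy v2 x i j = 0 := by
  unfold pairEnergy
  split_ifs with hij
  · rw [h2.eq_zero _ (le_of_not_ge fun hle => h ⟨hij.symm, hle⟩), EReal.toReal_zero]
  · rfl

lemma HasFiniteEnergy.neg_one_le_pairEnergy (hx : HasFiniteEnergy v2 x) (h2 : V2Hyp ε r0 v2)
    (i j : Fin n) : -1 ≤ pairEnergy v2 x i j := by
  unfold pairEnergy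
  split_ifs with hij
  · have hge := h2.ge_neg_one _ (dist_nonneg (x := x i) (y := x j))
    rw [← EReal.coe_toReal (hx i j hij) (h2.ne_bot dist_nonneg)] at hge
    exact EReal.coe_le_coe_iff.1 hge
  · norm_num

lemma HasFiniteEnergy.dist_eq_one (hx : HasFiniteEnergy v2 x) (h2 : V2Hyp ε r0 v2) {i j : Fin n}
    (h : pairEnergy v2 x i j = -1) : dist (x i) (x j) = 1 := by
  unfold pairEnergy at h
  split_ifs at h with hij
  · by_contra hne
    refine (h2.gt_neg_one _ dist_nonneg hne).ne' ?_
    rw [← EReal.coe_toReal (hx i j hij) (h2.ne_bot dist_nonneg), h]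
    rfl
  · norm_num at h

lemma angleEnergy_nonneg (h3 : V3Hyp ε v3) (i j k : Fin n) : 0 ≤ angleEnergy r0 v3 x i j k := by
  unfold angleEnergy
  split_ifs
  exacts [h3.nonneg (cwAngle_mem_Icc _ _), le_rfl]

lemma angleEnergy_comm (h3 : V3Hyp ε v3) (i j k : Fin n) :
    angleEnergy r0 v3 x i j k = angleEnergy r0 v3 x i k j := by
  rw [angleEnergy, angleEnergy, h3.cwAngle_comm]
  refine if_congr ?_ rfl rfl
  rw [ne_comm (a := j)]
  tauto

lemma angleEnergy_eq_of_adj {i j k : Fin n} (hj : (bondGraph r0 x).Adj i j)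
    (hk : (bondGraph r0 x).Adj i k) (hjk : j ≠ k) :
    angleEnergy r0 v3 x i j k = v3 (cwAngle (x j - x i) (x k - x i)) :=
  if_pos ⟨hj.1, hk.1, hjk, hj.2, hk.2⟩

section Update

variable {p : Pt}

lemma pairEnergy_update (h2 : V2Hyp ε r0 v2) (hp : ∀ j, r0 < dist p (x j)) (i a b : Fin n) :
    pairEnergy v2 (Function.update x i p) a b =
      if a = i ∨ b = i then 0 else pairEnergy v2 x a b := by
  have hnear : ∀ {c}, c ≠ i → pairEnergy v2 (Function.update x i p) i c = 0 := fun {c} hc => by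
    rw [pairEnergy, if_pos hc, Function.update_self, Function.update_of_ne hc,
      h2.eq_zero _ (hp c).le, EReal.toReal_zero]
  by_cases ha : a = i <;> by_cases hb : b = i
  · rw [ha, hb, pairEnergy_self, if_pos (Or.inl rfl)]
  · rw [ha, hnear hb, if_pos (Or.inl rfl)]
  · rw [hb, pairEnergy_comm, hnear ha, if_pos (Or.inr rfl)]
  · rw [if_neg (not_or.2 ⟨ha, hb⟩), pairEnergy, pairEnergy, Function.update_of_ne ha,
      Function.update_of_ne hb]

lemma angleEnergy_update (hp : ∀ j, r0 < dist p (x j)) (i a b c : Fin n) :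
    angleEnergy r0 v3 (Function.update x i p) a b c =
      if a = i ∨ b = i ∨ c = i then 0 else angleEnergy r0 v3 x a b c := by
  have hleft : ∀ c, ¬ dist p (x c) ≤ r0 := fun c => (hp c).not_ge
  have hright : ∀ c, ¬ dist (x c) p ≤ r0 := fun c => by rw [dist_comm]; exact hleft c
  unfold angleEnergy
  by_cases ha : a = i <;> by_cases hb : b = i <;> by_cases hc : c = i <;>
    simp [*, Function.update_of_ne, Ne.symm]

lemma HasFiniteEnergy.update (hx : HasFiniteEnergy v2 x) (h2 : V2Hyp ε r0 v2)
    (hp : ∀ j, r0 < dist p (x j)) (i : Fin n) : HasFiniteEnergy v2 (Function.update x i p) := by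
  intro a b hab
  by_cases ha : a = i
  · rw [ha, Function.update_self, Function.update_of_ne (ha ▸ hab), h2.eq_zero _ (hp b).le]
    exact EReal.zero_ne_top
  by_cases hb : b = i
  · rw [hb, Function.update_self, Function.update_of_ne ha, dist_comm, h2.eq_zero _ (hp a).le]
    exact EReal.zero_ne_top
  · rw [Function.update_of_ne ha, Function.update_of_ne hb]
    exact hx a b hab

end Update

namespace IsMinimizer

/-- Moving a point of a minimizer far away cannot decrease the energy. -/
lemma sum_pairEnergy_add_le (hx : IsMinimizer r0 v2 v3 x) (h2 : V2Hyp ε r0 v2) (h3 : V3Hyp ε v3)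
    (hr : 0 ≤ r0) (hfin : HasFiniteEnergy v2 x) (i : Fin n) :
    ∑ j, pairEnergy v2 x i j + 1 / 2 * ∑ j, ∑ k, angleEnergy r0 v3 x i j k ≤ 0 := by
  obtain ⟨p, hp⟩ := NormedSpace.exists_lt_norm ℝ Pt (∑ j, ‖x j‖ + r0)
  have hfar : ∀ j, r0 < dist p (x j) := fun j => by
    have hsingle := Finset.single_le_sum (f := fun j => ‖x j‖) (fun j _ => norm_nonneg _)
      (Finset.mem_univ j)
    rw [dist_eq_norm]
    linarith [norm_sub_norm_le p (x j)]
  have hinj : Function.Injective (Function.update x i p) :=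
    injective_update hx.1 (fun j => dist_pos.1 (hr.trans_lt (hfar j))) i
  have hmin := hx.2 _ hinj
  rw [hfin.energy_eq_coe h2, (hfin.update h2 hfar i).energy_eq_coe h2, EReal.coe_le_coe_iff,
    realEnergy, realEnergy] at hmin
  simp only [pairEnergy_update h2 hfar, angleEnergy_update hfar] at hmin
  rw [sum_sum_ite_or_eq pairEnergy_self pairEnergy_comm] at hmin
  linarith [sum_sum_sum_ite_or_le (angleEnergy_nonneg (r0 := r0) (x := x) h3) i]

open Classical in
lemma sum_angleEnergy_le (hx : IsMinimizer r0 v2 v3 x) (h2 : V2Hyp ε r0 v2) (h3 : V3Hyp ε v3)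
    (hr : 0 ≤ r0) (hfin : HasFiniteEnergy v2 x) (i : Fin n) :
    ∑ j, ∑ k, angleEnergy r0 v3 x i j k ≤ 2 * ((bondGraph r0 x).neighborFinset i).card := by
  have hpair : -(((bondGraph r0 x).neighborFinset i).card : ℝ) ≤ ∑ j, pairEnergy v2 x i j := by
    rw [SimpleGraph.neighborFinset_eq_filter, Finset.card_filter, Nat.cast_sum,
      ← Finset.sum_neg_distrib]
    refine Finset.sum_le_sum fun j _ => ?_
    split_ifs with hj
    · simpa using hfin.neg_one_le_pairEnergy h2 i j
    · simp [pairEnergy_eq_zero_of_not_adj h2 hj]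
  linarith [hx.sum_pairEnergy_add_le h2 h3 hr hfin i]

lemma pairwise_cwAngle_le (hx : IsMinimizer r0 v2 v3 x) (h2 : V2Hyp ε r0 v2) (h3 : V3Hyp ε v3)
    (hε : 0 < ε) (hε' : ε < 1 / 100) (hr : 0 ≤ r0) (hfin : HasFiniteEnergy v2 x) (i : Fin n) :
    ((bondGraph r0 x).neighborSet i).Pairwise fun j k =>
      v3 (cwAngle (x j - x i) (x k - x i)) ≤ 14 := by
  classical
  have hsmall := pairwise_le_of_sum_sum_le (angleEnergy_nonneg (r0 := r0) (x := x) h3 i)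
    (angleEnergy_comm h3 i) (m := 4) (c := 14) (by norm_num) (fun t ht hpair => ?_)
    (hx.sum_angleEnergy_le h2 h3 hr hfin i)
  · intro j hj k hk hjk
    rw [← angleEnergy_eq_of_adj (v3 := v3) hj hk hjk]
    exact hsmall (by simpa using hj) (by simpa using hk) hjk
  · have hadj : ∀ j ∈ t, (bondGraph r0 x).Adj i j := fun j hj => by simpa using ht hj
    have hne : ∀ j ∈ t, x i ≠ x j := fun j hj => hx.1.ne (hadj j hj).ne
    have hnorm : ∀ j ∈ t, ‖dir (toC (x i)) (toC (x j))‖ = 1 := fun j hj =>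
      norm_dir (toC.injective.ne (hne j hj))
    refine card_le_four_of_almostPerp_or_almostOpposite hnorm fun j hj k hk hjk => ?_
    refine h3.almostPerp_or_almostOpposite hε hε' (hnorm j hj) (hnorm k hk) (cwAngle_mem_Icc _ _)
      (cos_cwAngle_sub (hne j hj) (hne k hk)) ?_
    rw [← angleEnergy_eq_of_adj (v3 := v3) (hadj j hj) (hadj k hk) hjk]
    exact hpair hj hk hjk

lemma exists_ncard_edgeSet_bondGraph_add_le (hx : IsMinimizer r0 v2 v3 x) (h2 : V2Hyp ε r0 v2)
    (h3 : V3Hyp ε v3) (hε : 0 < ε) (hε' : ε < 1 / 100) (hr : 0 ≤ r0)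
    (hfin : HasFiniteEnergy v2 x) :
    ∃ N : ℕ, 4 * n ≤ N ^ 2 ∧ ((bondGraph r0 x).edgeSet.ncard : ℝ) + N ≤
      2 * n + 47 / 100 * ∑ i, ∑ j, ∑ k, angleEnergy r0 v3 x i j k := by
  have hne : ∀ {i j}, (bondGraph r0 x).Adj i j → x i ≠ x j := fun h => hx.1.ne h.ne
  have hnorm : ∀ {i j}, (bondGraph r0 x).Adj i j → ‖dir (toC (x i)) (toC (x j))‖ = 1 :=
    fun h => norm_dir (toC.injective.ne (hne h))
  have hle := hx.pairwise_cwAngle_le h2 h3 hε hε' hr hfin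
  have hbound := exists_ncard_edgeSet_add_le (z := toC ∘ x) (toC.injective.comp hx.1)
    (G := bondGraph r0 x) (A := angleEnergy r0 v3 x) (fun i j hj k hk hjk =>
      h3.almostPerp_or_almostOpposite hε hε' (hnorm hj) (hnorm hk) (cwAngle_mem_Icc _ _)
        (cos_cwAngle_sub (hne hj) (hne hk)) (hle i hj hk hjk))
    (angleEnergy_nonneg h3) (angleEnergy_comm h3) fun i j k hj hk hjk hopp => by
      rw [angleEnergy_eq_of_adj hj hk hjk]
      exact h3.norm_sq_sub_sq_le hε hε' (hnorm hj) (hnorm hk) (cwAngle_mem_Icc _ _)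
        (cos_cwAngle_sub (hne hj) (hne hk)) hopp (hle i hj hk hjk)
  simpa only [Fintype.card_fin] using hbound

end IsMinimizer

end Energy

/-! ### Lattice configurations -/

section Lattice

open GaussianInt

lemma norm_toComplex_sq (w : GaussianInt) : ‖(w : ℂ)‖ ^ 2 = w.norm := by
  rw [Complex.sq_norm, intCast_real_norm]

lemma norm_toComplex_eq_one_iff {w : GaussianInt} : ‖(w : ℂ)‖ = 1 ↔ w.norm = 1 := by
  rw [← pow_eq_one_iff_of_nonneg (_root_.norm_nonneg (w : ℂ)) two_ne_zero, norm_toComplex_sq,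
    Int.cast_eq_one]

lemma inner_eq_zero_or_add_eq_zero_of_norm_eq_one {w w' : GaussianInt} (hw : w.norm = 1)
    (hw' : w'.norm = 1) (hne : w ≠ w') : inner ℝ (w : ℂ) w' = 0 ∨ w + w' = 0 := by
  have hsub := norm_pos.2 (sub_ne_zero.2 hne)
  have hadd := GaussianInt.norm_nonneg (w + w')
  rw [or_iff_not_imp_right, ← norm_eq_zero]
  intro h
  have hinner : w.re * w'.re + w.im * w'.im = 0 := by
    simp only [Zsqrtd.norm_def, Zsqrtd.re_sub, Zsqrtd.im_sub, Zsqrtd.re_add, Zsqrtd.im_add]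
      at hw hw' hsub hadd h
    have hlt : w.re * w'.re + w.im * w'.im < 1 := by linarith
    have hge : -1 ≤ w.re * w'.re + w.im * w'.im := by linarith
    have hne' : w.re * w'.re + w.im * w'.im ≠ -1 := fun h' => h (by linarith)
    omega
  rw [real_inner_eq_re_mul_re_add_im_mul_im, ← intCast_re, ← intCast_re, ← intCast_im,
    ← intCast_im]
  exact_mod_cast hinner

/-- A point of the lattice `ℤ²`, encoded by a Gaussian integer. -/
def latticePoint (g : GaussianInt) : Pt := toC.symm g

lemma toC_latticePoint (g : GaussianInt) : toC (latticePoint g) = g :=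
  toC.apply_symm_apply _

lemma dist_latticePoint_sq (g h : GaussianInt) :
    dist (latticePoint g) (latticePoint h) ^ 2 = (h - g).norm := by
  rw [← norm_toC_sub, toC_latticePoint, toC_latticePoint, ← toComplex_sub, norm_toComplex_sq]

lemma latticePoint_injective : Function.Injective latticePoint :=
  toC.symm.injective.comp toComplex_injective

lemma norm_sub_eq_one_of_dist_lt_sqrt_two {g h : GaussianInt} (hne : g ≠ h)
    (hdist : dist (latticePoint g) (latticePoint h) < √2) : (h - g).norm = 1 := by
  have hpos := norm_pos.2 (sub_ne_zero.2 hne.symm)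
  have hlt := pow_lt_pow_left₀ hdist dist_nonneg two_ne_zero
  rw [dist_latticePoint_sq, Real.sq_sqrt zero_le_two] at hlt
  have : (h - g).norm < 2 := by exact_mod_cast hlt
  omega

lemma dir_toC_latticePoint {g h : GaussianInt} (hnorm : (h - g).norm = 1) :
    dir (toC (latticePoint g)) (toC (latticePoint h)) = (h - g : GaussianInt) := by
  rw [toC_latticePoint, toC_latticePoint, dir, ← toComplex_sub,
    NormedSpace.normalize_eq_self_of_norm_eq_one (norm_toComplex_eq_one_iff.2 hnorm)]

variable {n : ℕ} {ε r0 : ℝ} {v2 : ℝ → EReal} {v3 : ℝ → ℝ} {g : Fin n → GaussianInt}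

lemma V2Hyp.dist_latticePoint (h2 : V2Hyp ε r0 v2) (hr : r0 < √2) {g h : GaussianInt}
    (hne : g ≠ h) : v2 (dist (latticePoint g) (latticePoint h)) =
      ((if (h - g).norm = 1 then -1 else 0 : ℝ) : EReal) := by
  split_ifs with hnorm
  · have hdist := dist_latticePoint_sq g h
    rw [hnorm, Int.cast_one, pow_eq_one_iff_of_nonneg dist_nonneg two_ne_zero] at hdist
    rw [hdist, h2.eq_neg_one]
    rfl
  · refine h2.eq_zero _ (hr.le.trans (le_of_not_gt fun hlt => hnorm ?_))
    exact norm_sub_eq_one_of_dist_lt_sqrt_two hne hlt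

lemma hasFiniteEnergy_latticePoint (h2 : V2Hyp ε r0 v2) (hr : r0 < √2)
    (hg : Function.Injective g) : HasFiniteEnergy v2 (latticePoint ∘ g) := fun i j hij => by
  rw [Function.comp_apply, Function.comp_apply, h2.dist_latticePoint hr (hg.ne hij.symm)]
  exact EReal.coe_ne_top _

lemma pairEnergy_latticePoint (h2 : V2Hyp ε r0 v2) (hr : r0 < √2) (hg : Function.Injective g)
    (i j : Fin n) :
    pairEnergy v2 (latticePoint ∘ g) i j = if (g j - g i).norm = 1 then -1 else 0 := by
  unfold pairEnergy
  split_ifs with hij hnorm hnorm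
  · rw [Function.comp_apply, Function.comp_apply, h2.dist_latticePoint hr (hg.ne hij.symm),
      if_pos hnorm, EReal.toReal_coe]
  · rw [Function.comp_apply, Function.comp_apply, h2.dist_latticePoint hr (hg.ne hij.symm),
      if_neg hnorm, EReal.toReal_coe]
  · simp [not_not.1 hij] at hnorm
  · rfl

lemma angleEnergy_latticePoint (h3 : V3Hyp ε v3) (hr : r0 < √2) (hg : Function.Injective g)
    (i j k : Fin n) : angleEnergy r0 v3 (latticePoint ∘ g) i j k = 0 := by
  unfold angleEnergy
  split_ifs with h
  · obtain ⟨hij, hik, hjk, hj, hk⟩ := h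
    have hnormj := norm_sub_eq_one_of_dist_lt_sqrt_two (hg.ne hij) (hj.trans_lt hr)
    have hnormk := norm_sub_eq_one_of_dist_lt_sqrt_two (hg.ne hik) (hk.trans_lt hr)
    refine (h3.cwAngle_sub_eq_zero_iff (latticePoint_injective.ne (hg.ne hij))
      (latticePoint_injective.ne (hg.ne hik))).2 ?_
    rw [dir_toC_latticePoint hnormj, dir_toC_latticePoint hnormk, ← toComplex_add,
      toComplex_eq_zero]
    exact inner_eq_zero_or_add_eq_zero_of_norm_eq_one hnormj hnormk
      fun h => hjk (hg (sub_left_injective h))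
  · rfl

lemma sum_sum_eq_two_mul_sum_sum_Iio {f : Fin n → Fin n → ℝ} (hself : ∀ i, f i i = 0)
    (hsymm : ∀ i j, f i j = f j i) : ∑ i, ∑ j, f i j = 2 * ∑ i, ∑ j ∈ Finset.Iio i, f i j := by
  have hsplit : ∀ i j, f i j = (if j < i then f i j else 0) + (if i < j then f j i else 0) :=
    fun i j => by
      rcases lt_trichotomy i j with h | rfl | h
      · rw [if_neg h.not_gt, if_pos h, zero_add, hsymm]
      · simp [hself]
      · rw [if_pos h, if_neg h.not_gt, add_zero]
  rw [Finset.sum_congr rfl fun i _ => Finset.sum_congr rfl fun j _ => hsplit i j]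
  simp only [← Finset.filter_gt_eq_Iio, Finset.sum_filter, Finset.sum_add_distrib]
  rw [Finset.sum_comm (f := fun i j => if i < j then f j i else 0), ← two_mul]

/-- The width of a strip such that filling it row by row produces an almost optimal number of
bonds. -/
lemma exists_width {n : ℕ} (hn : 1 ≤ n) :
    ∃ a : ℕ, 0 < a ∧ ∀ N : ℕ, 4 * n ≤ N ^ 2 → a + 1 + (n - 1) / a ≤ N := by
  obtain ⟨m, rfl⟩ := Nat.exists_eq_add_of_le' hn
  refine ⟨m.sqrt + 1, m.sqrt.succ_pos, fun N hN => ?_⟩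
  have hle := m.sqrt_le
  have hlt := m.lt_succ_sqrt
  rw [Nat.add_sub_cancel]
  set s := m.sqrt
  by_cases h : m < s * (s + 1)
  · have hdiv : m / (s + 1) < s := (Nat.div_lt_iff_lt_mul s.succ_pos).2 h
    have : 2 * s < N := by
      by_contra!
      nlinarith
    omega
  · have hdiv : m / (s + 1) < s + 1 := (Nat.div_lt_iff_lt_mul s.succ_pos).2 hlt
    have : 2 * s + 1 < N := by
      by_contra!
      nlinarith
    omega

/-- The lattice points obtained by filling a strip of width `a` row by row. -/
def stripPoint (a i : ℕ) : GaussianInt := ⟨(i % a : ℕ), (i / a : ℕ)⟩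

lemma stripPoint_injective (a : ℕ) : Function.Injective (stripPoint a) := fun i j h => by
  obtain ⟨hmod, hdiv⟩ := Zsqrtd.ext_iff.1 h
  simp only [stripPoint, Nat.cast_inj] at hmod hdiv
  rw [← Nat.div_add_mod i a, ← Nat.div_add_mod j a, hmod, hdiv]

lemma norm_stripPoint_sub_stripPoint_add_width {a : ℕ} (ha : 0 < a) (i : ℕ) :
    (stripPoint a i - stripPoint a (i + a)).norm = 1 := by
  simp [stripPoint, Zsqrtd.norm_def, Nat.add_div_right _ ha]

lemma norm_stripPoint_sub_stripPoint_succ {a i : ℕ} (hi : ¬ a ∣ i + 1) :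
    (stripPoint a i - stripPoint a (i + 1)).norm = 1 := by
  have hdiv : (i + 1) / a = i / a := by rw [Nat.succ_div, if_neg hi, add_zero]
  have hmod : (i + 1) % a = i % a + 1 := by
    have hi := Nat.div_add_mod i a
    have hi' := Nat.div_add_mod (i + 1) a
    rw [hdiv] at hi'
    omega
  simp [stripPoint, Zsqrtd.norm_def, hdiv, hmod]

lemma ite_le_sum_Iio (i : Fin n) {d : ℕ} (hd : 0 < d) : (if d ≤ (i : ℕ) then 1 else 0 : ℝ) ≤
    ∑ j ∈ Finset.Iio i, if (i : ℕ) = j + d then 1 else 0 := by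
  split_ifs with h
  · have hlt : (i : ℕ) - d < n := by omega
    refine le_trans ?_ (Finset.single_le_sum (fun j _ => ?_)
      (Finset.mem_Iio.2 (show (⟨i - d, hlt⟩ : Fin n) < i from Fin.mk_lt_of_lt_val (by omega))))
    · rw [if_pos (by simp only; omega)]
    · split_ifs <;> norm_num
  · exact Finset.sum_nonneg fun j _ => by split_ifs <;> norm_num

/-- Each point of the strip has a neighbour below it, except in the first row, and a neighbour to
its left, except in the first column. -/
lemma sum_Iio_pairEnergy_stripPoint_le (h2 : V2Hyp ε r0 v2) (hr : r0 < √2) {a : ℕ} (ha : 0 < a)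
    (i : Fin n) :
    ∑ j ∈ Finset.Iio i, pairEnergy v2 (fun i : Fin n => latticePoint (stripPoint a i)) i j ≤
      -((if a ≤ (i : ℕ) then 1 else 0) + (if a ∣ (i : ℕ) then 0 else 1)) := by
  have hpair : ∀ j, pairEnergy v2 (fun i : Fin n => latticePoint (stripPoint a i)) i j =
      if (stripPoint a j - stripPoint a i).norm = 1 then -1 else 0 :=
    pairEnergy_latticePoint h2 hr ((stripPoint_injective a).comp Fin.val_injective) i
  have hbelow : ∀ j : ℕ, (i : ℕ) = j + a → (stripPoint a j - stripPoint a i).norm = 1 :=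
    fun j hj => hj ▸ norm_stripPoint_sub_stripPoint_add_width ha j
  have hleft : ∀ j : ℕ, (i : ℕ) = j + 1 → ¬ a ∣ (i : ℕ) →
      (stripPoint a j - stripPoint a i).norm = 1 := fun j hj hi => by
    rw [hj] at hi ⊢
    exact norm_stripPoint_sub_stripPoint_succ hi
  have hbond : ∀ j ∈ Finset.Iio i,
      pairEnergy v2 (fun i : Fin n => latticePoint (stripPoint a i)) i j ≤
        -((if (i : ℕ) = j + a then 1 else 0) +
          (if a ∣ (i : ℕ) then 0 else 1) * (if (i : ℕ) = j + 1 then 1 else 0)) := fun j _ => by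
    rw [hpair]
    by_cases hnorm : (stripPoint a j - stripPoint a i).norm = 1
    · rw [if_pos hnorm]
      have hone : (i : ℕ) = j + a → (i : ℕ) = j + 1 → a ∣ (i : ℕ) := fun h h' =>
        (by omega : a = 1) ▸ one_dvd _
      split_ifs <;> first | norm_num; done | tauto
    · have hdvd : (i : ℕ) = j + 1 → a ∣ (i : ℕ) := fun hj =>
        by_contra fun hi => hnorm (hleft j hj hi)
      rw [if_neg hnorm, if_neg (mt (hbelow j) hnorm)]
      split_ifs <;> first | norm_num; done | tauto
  refine (Finset.sum_le_sum hbond).trans ?_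
  rw [Finset.sum_neg_distrib, Finset.sum_add_distrib, ← Finset.mul_sum, neg_le_neg_iff]
  gcongr
  · exact ite_le_sum_Iio i ha
  · split_ifs with hi
    · simp
    · have hpos : 1 ≤ (i : ℕ) := Nat.one_le_iff_ne_zero.2 fun h => hi (h ▸ dvd_zero a)
      simpa [hpos] using ite_le_sum_Iio i one_pos

lemma two_mul_le_sum_range_bonds {n : ℕ} (a : ℕ) (hn : 1 ≤ n) :
    2 * n ≤ ∑ i ∈ Finset.range n, ((if a ≤ i then 1 else 0) + (if a ∣ i then 0 else 1)) +
      (a + 1 + (n - 1) / a) := by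
  obtain ⟨m, rfl⟩ := Nat.exists_eq_add_of_le' hn
  have hrow : m + 1 ≤ ∑ i ∈ Finset.range (m + 1), (if a ≤ i then 1 else 0) + a := by
    rw [← Finset.card_filter, ← Nat.sub_le_iff_le_add, ← Nat.card_Ico]
    refine Finset.card_le_card fun i hi => ?_
    simpa [and_comm] using hi
  have hcolumn : m ≤ ∑ i ∈ Finset.range (m + 1), (if a ∣ i then 0 else 1) + m / a := by
    have hcard := Finset.card_filter_add_card_filter_not (s := Finset.range m) (a ∣ · + 1)
    rw [Nat.card_multiples, Finset.card_range, Finset.card_filter] at hcard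
    simp only [Finset.sum_range_succ', dvd_zero, if_true, ite_not] at hcard ⊢
    omega
  rw [Finset.sum_add_distrib, Nat.add_sub_cancel]
  omega

theorem exists_realEnergy_le (h2 : V2Hyp ε r0 v2) (h3 : V3Hyp ε v3) (hr : r0 < √2)
    (hn : 1 ≤ n) : ∃ y : Fin n → Pt, Function.Injective y ∧ HasFiniteEnergy v2 y ∧
      ∀ N : ℕ, 4 * n ≤ N ^ 2 → realEnergy r0 v2 v3 y ≤ N - 2 * n := by
  obtain ⟨a, ha, hwidth⟩ := exists_width hn
  have hg : Function.Injective fun i : Fin n => stripPoint a i :=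
    (stripPoint_injective a).comp Fin.val_injective
  refine ⟨_, latticePoint_injective.comp hg, hasFiniteEnergy_latticePoint h2 hr hg,
    fun N hN => ?_⟩
  have hbonds : ((2 * n : ℕ) : ℝ) ≤ _ := Nat.cast_le.2 (two_mul_le_sum_range_bonds a hn)
  have hle : ((a + 1 + (n - 1) / a : ℕ) : ℝ) ≤ N := by exact_mod_cast hwidth N hN
  have hsum := Finset.sum_le_sum fun (i : Fin n) (_ : i ∈ Finset.univ) =>
    sum_Iio_pairEnergy_stripPoint_le h2 hr ha i
  rw [Finset.sum_neg_distrib, Fin.sum_univ_eq_sum_range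
    (fun i => (if a ≤ i then 1 else 0) + (if a ∣ i then 0 else 1) : ℕ → ℝ)] at hsum
  rw [realEnergy, sum_sum_eq_two_mul_sum_sum_Iio pairEnergy_self pairEnergy_comm]
  simp only [angleEnergy_latticePoint h3 hr hg, Finset.sum_const_zero, mul_zero, add_zero]
  push_cast at hbonds hle
  change 1 / 2 * (2 * ∑ i : Fin n, ∑ j ∈ Finset.Iio i,
    pairEnergy v2 (fun i : Fin n => latticePoint (stripPoint a i)) i j) ≤ _
  linarith

end Lattice

/-! ### Exact configurations -/

section Exact

variable {ι : Type*} {z : ι → ℂ} {G : SimpleGraph ι}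

lemma ncard_edgeSet_le_add_compl [Finite ι] {s : Set ι} (hs : ∀ i j, G.Adj i j → i ∈ s → j ∈ s) :
    G.edgeSet.ncard ≤ (G.induce s).edgeSet.ncard + (G.induce sᶜ).edgeSet.ncard := by
  classical
  have := Fintype.ofFinite ι
  simp only [← SimpleGraph.coe_edgeFinset, Set.ncard_coe_finset]
  rw [← Finset.card_map (Function.Embedding.subtype (· ∈ s)).sym2Map,
    ← Finset.card_map (Function.Embedding.subtype (· ∈ sᶜ)).sym2Map,
    SimpleGraph.map_edgeFinset_induce, SimpleGraph.map_edgeFinset_induce]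
  refine (Finset.card_le_card fun e he => ?_).trans (Finset.card_union_le _ _)
  induction e with
  | _ i j =>
    have hij : G.Adj i j := SimpleGraph.mem_edgeFinset.1 he
    have hji := hs j i hij.symm
    have hij' := hs i j hij
    simp only [Finset.mem_union, Finset.mem_inter, he, Finset.mk_mem_sym2_iff, Set.mem_toFinset,
      Set.mem_compl_iff]
    tauto

/-- Configurations as rigid as minimizers turn out to be: all bonds have unit length and meet at
multiples of `π / 2`, and there are at least `2 * n - ⌈2 * √n⌉` bonds between the `n` points. -/
structure IsExact (z : ι → ℂ) (G : SimpleGraph ι) : Prop where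
  injective : Function.Injective z
  norm_sub : ∀ {i j}, G.Adj i j → ‖z j - z i‖ = 1
  angle : ∀ i, (G.neighborSet i).Pairwise fun j k =>
    inner ℝ (z j - z i) (z k - z i) = 0 ∨ (z j - z i) + (z k - z i) = 0
  two_mul_card_le : ∀ N : ℕ, 4 * Nat.card ι ≤ N ^ 2 → 2 * Nat.card ι ≤ G.edgeSet.ncard + N

namespace IsExact

lemma dir_eq (h : IsExact z G) {i j : ι} (hij : G.Adj i j) : dir (z i) (z j) = z j - z i :=
  NormedSpace.normalize_eq_self_of_norm_eq_one (h.norm_sub hij)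

lemma add_eq_zero_of_almostOpposite (h : IsExact z G) {i j k : ι} (hij : G.Adj i j)
    (hik : G.Adj i k) (hjk : j ≠ k) (hopp : AlmostOpposite (z j - z i) (z k - z i)) :
    (z j - z i) + (z k - z i) = 0 :=
  (h.angle i hij hik hjk).resolve_left fun h0 => by
    have hnorm := norm_add_sq_of_norm_eq_one (h.norm_sub hij) (h.norm_sub hik)
    rw [h0] at hnorm
    rw [AlmostOpposite] at hopp
    nlinarith [norm_nonneg (z j - z i + (z k - z i))]

lemma exists_ncard_edgeSet_induce_add_le [Finite ι] (h : IsExact z G) (s : Set ι) :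
    ∃ N : ℕ, 4 * s.ncard ≤ N ^ 2 ∧ (G.induce s).edgeSet.ncard + N ≤ 2 * s.ncard := by
  have := Fintype.ofFinite s
  have hdir : ∀ {i j : s}, (G.induce s).Adj i j → dir (z i) (z j) = z j - z i := fun hij =>
    h.dir_eq hij
  have hangle : ∀ {i j k : s}, (G.induce s).Adj i j → (G.induce s).Adj i k → j ≠ k →
      inner ℝ (z j - z i) (z k - z i) = 0 ∨ (z j - z i) + (z k - z i) = 0 :=
    fun hij hik hjk => h.angle _ hij hik (Subtype.val_injective.ne hjk)
  obtain ⟨N, hN, hle⟩ := exists_ncard_edgeSet_add_le (z := fun i : s => z i) (G := G.induce s)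
    (A := fun _ _ _ => 0) (h.injective.comp Subtype.val_injective)
    (fun i j hj k hk hjk => by
      beta_reduce
      rw [hdir hj, hdir hk]
      exact (hangle hj hk hjk).imp (fun h0 => by rw [AlmostPerp, h0]; norm_num)
        fun h0 => by rw [AlmostOpposite, h0]; norm_num)
    (fun _ _ _ => le_rfl) (fun _ _ _ => rfl)
    (fun i j k hj hk hjk hopp => by
      rw [hdir hj, hdir hk] at hopp ⊢
      have hsum : (z j - z i) + (z k - z i) = 0 :=
        h.add_eq_zero_of_almostOpposite hj hk (Subtype.val_injective.ne hjk) hopp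
      rw [eq_neg_of_add_eq_zero_left hsum, neg_sq, sub_self, norm_zero, mul_zero])
  rw [← Nat.card_eq_fintype_card, Nat.card_coe_set_eq] at hN hle
  simp only [Finset.sum_const_zero, mul_zero, add_zero] at hle
  exact ⟨N, hN, by exact_mod_cast hle⟩

/-- Two components would each satisfy the bound on the number of bonds, but `2 * √n` is strictly
subadditive. -/
lemma connected [Finite ι] [Nonempty ι] (h : IsExact z G) : G.Connected := by
  refine ⟨fun i j => ?_⟩
  by_contra hij
  set s : Set ι := {k | G.Reachable i k}
  obtain ⟨P, hP, hleP⟩ := h.exists_ncard_edgeSet_induce_add_le s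
  obtain ⟨Q, hQ, hleQ⟩ := h.exists_ncard_edgeSet_induce_add_le sᶜ
  have hs : 0 < s.ncard := (Set.ncard_pos).2 ⟨i, .refl i⟩
  have hsc : 0 < sᶜ.ncard := (Set.ncard_pos).2 ⟨j, hij⟩
  have hcard := Set.ncard_add_ncard_compl s
  have hedges := ncard_edgeSet_le_add_compl (G := G) (s := s) fun k l hkl hk =>
    hk.trans hkl.reachable
  have hP2 : 2 ≤ P := by
    by_contra!
    nlinarith
  have hQ2 : 2 ≤ Q := by
    by_contra!
    nlinarith
  obtain ⟨P, rfl⟩ := Nat.exists_eq_add_of_le' (one_le_two.trans hP2)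
  have hN := h.two_mul_card_le (P + Q) (by nlinarith)
  omega

lemma eq_I_mul_or_eq_neg_I_mul {v w : ℂ} (hw : ‖w‖ = 1) (hv : ‖v‖ = 1) (h : inner ℝ w v = 0) :
    v = Complex.I * w ∨ v = -(Complex.I * w) := by
  have hsq := norm_sq_add_sq hw hv
  rw [h, abs_zero, mul_zero, norm_eq_zero] at hsq
  rw [← sq_eq_sq_iff_eq_or_eq_neg, mul_pow, Complex.I_sq]
  linear_combination hsq

lemma exists_sub_eq_mul_of_adj (h : IsExact z G) {u : ℂ} {i j k : ι}
    (hij : G.Adj i j) (hik : G.Adj i k) {w : GaussianInt} (hj : z j - z i = u * w) :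
    ∃ w' : GaussianInt, z k - z i = u * w' := by
  have hI : ((⟨0, 1⟩ : GaussianInt) : ℂ) = Complex.I := by simp [GaussianInt.toComplex_def']
  obtain rfl | hjk := eq_or_ne j k
  · exact ⟨w, hj⟩
  rcases h.angle i hij hik hjk with h0 | h0
  · rcases eq_I_mul_or_eq_neg_I_mul (h.norm_sub hij) (h.norm_sub hik) h0 with hk | hk
    · exact ⟨⟨0, 1⟩ * w, by rw [hk, hj, map_mul, hI]; ring⟩
    · exact ⟨-(⟨0, 1⟩ * w), by rw [hk, hj, map_neg, map_mul, hI]; ring⟩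
  · exact ⟨-w, by rw [eq_neg_of_add_eq_zero_right h0, hj]; simp⟩

lemma exists_unit_of_neighbors (h : IsExact z G) (i : ι) :
    ∃ u : ℂ, ‖u‖ = 1 ∧ ∀ j, G.Adj i j → ∃ w : GaussianInt, z j - z i = u * w := by
  by_cases hi : ∃ k, G.Adj i k
  · obtain ⟨k, hk⟩ := hi
    exact ⟨z k - z i, h.norm_sub hk, fun j hj =>
      h.exists_sub_eq_mul_of_adj hk hj (w := 1) (by simp)⟩
  · exact ⟨1, norm_one, fun j hj => (hi ⟨j, hj⟩).elim⟩

lemma exists_lattice [Finite ι] [Nonempty ι] (h : IsExact z G) :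
    ∃ (u c : ℂ) (g : ι → GaussianInt), ‖u‖ = 1 ∧ ∀ i, z i = c + u * g i := by
  obtain ⟨i₀⟩ := ‹Nonempty ι›
  obtain ⟨u, hu, hi₀⟩ := h.exists_unit_of_neighbors i₀
  suffices hreach : ∀ i, Relation.ReflTransGen G.Adj i₀ i →
      (∃ g : GaussianInt, z i = z i₀ + u * g) ∧
        ∀ j, G.Adj i j → ∃ w : GaussianInt, z j - z i = u * w by
    choose g hg using fun i =>
      (hreach i ((G.reachable_iff_reflTransGen i₀ i).1 (h.connected i₀ i))).1
    exact ⟨u, z i₀, g, hu, hg⟩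
  intro i hi
  induction hi with
  | refl => exact ⟨⟨0, by simp⟩, hi₀⟩
  | tail _ hij ih =>
    obtain ⟨⟨g, hg⟩, hdir⟩ := ih
    obtain ⟨w, hw⟩ := hdir _ hij
    refine ⟨⟨g + w, ?_⟩, fun k hk =>
      h.exists_sub_eq_mul_of_adj hij.symm hk (w := -w) ?_⟩
    · rw [map_add, mul_add, ← hw, ← add_assoc, ← hg, add_sub_cancel]
    · rw [map_neg, mul_neg, ← hw, neg_sub]

end IsExact
end Exact

section Minimizer

variable {n : ℕ} {ε r0 : ℝ} {v2 : ℝ → EReal} {v3 : ℝ → ℝ} {x y : Fin n → Pt}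

open Classical in
/-- The two-body energy of an ordered pair of points in excess of that of an optimal configuration,
where every bond has energy `-1`. -/
def bondExcess (r0 : ℝ) (v2 : ℝ → EReal) (x : Fin n → Pt) (i j : Fin n) : ℝ :=
  pairEnergy v2 x i j + if (bondGraph r0 x).Adj i j then 1 else 0

lemma sum_bondExcess_add_sum_angleEnergy :
    ∑ i, ∑ j, bondExcess r0 v2 x i j + ∑ i, ∑ j, ∑ k, angleEnergy r0 v3 x i j k =
      2 * (realEnergy r0 v2 v3 x + (bondGraph r0 x).edgeSet.ncard) := by
  classical
  have hcard : ∑ i, ∑ j, (if (bondGraph r0 x).Adj i j then 1 else 0 : ℝ) =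
      2 * (bondGraph r0 x).edgeSet.ncard := by
    rw [← SimpleGraph.coe_edgeFinset, Set.ncard_coe_finset, ← Fintype.sum_prod_type',
      Finset.sum_boole]
    exact_mod_cast (bondGraph r0 x).two_mul_card_edgeFinset.symm
  simp only [realEnergy, bondExcess, Finset.sum_add_distrib, hcard]
  ring

lemma HasFiniteEnergy.bondExcess_nonneg (hx : HasFiniteEnergy v2 x) (h2 : V2Hyp ε r0 v2)
    (i j : Fin n) : 0 ≤ bondExcess r0 v2 x i j := by
  unfold bondExcess
  split_ifs with h
  · linarith [hx.neg_one_le_pairEnergy h2 i j]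
  · rw [pairEnergy_eq_zero_of_not_adj h2 h, add_zero]

lemma HasFiniteEnergy.dist_eq_one_of_bondExcess_eq_zero (hx : HasFiniteEnergy v2 x)
    (h2 : V2Hyp ε r0 v2) {i j : Fin n} (hij : (bondGraph r0 x).Adj i j)
    (h : bondExcess r0 v2 x i j = 0) : dist (x i) (x j) = 1 := by
  rw [bondExcess, if_pos hij] at h
  exact hx.dist_eq_one h2 (eq_neg_of_add_eq_zero_left h)

namespace IsMinimizer

lemma hasFiniteEnergy (hx : IsMinimizer r0 v2 v3 x) (h2 : V2Hyp ε r0 v2)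
    (hy : Function.Injective y) (hfin : HasFiniteEnergy v2 y) : HasFiniteEnergy v2 x :=
  hasFiniteEnergy_of_energy_ne_top h2
    (ne_top_of_le_ne_top (hfin.energy_eq_coe h2 ▸ EReal.coe_ne_top _) (hx.2 y hy))

lemma realEnergy_le (hx : IsMinimizer r0 v2 v3 x) (h2 : V2Hyp ε r0 v2)
    (hy : Function.Injective y) (hfin : HasFiniteEnergy v2 y) :
    realEnergy r0 v2 v3 x ≤ realEnergy r0 v2 v3 y := by
  have hle := hx.2 y hy
  rwa [(hx.hasFiniteEnergy h2 hy hfin).energy_eq_coe h2, hfin.energy_eq_coe h2,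
    EReal.coe_le_coe_iff] at hle

/-- The bond count bounds the energy from below by that of the competitor plus a positive multiple
of the two nonnegative sums, which must therefore vanish. -/
lemma bondExcess_eq_zero_and_angleEnergy_eq_zero (hx : IsMinimizer r0 v2 v3 x)
    (h2 : V2Hyp ε r0 v2) (h3 : V3Hyp ε v3) (hε : 0 < ε) (hε' : ε < 1 / 100) (hr0 : 0 ≤ r0)
    (hy : Function.Injective y) (hyfin : HasFiniteEnergy v2 y)
    (hyE : ∀ N : ℕ, 4 * n ≤ N ^ 2 → realEnergy r0 v2 v3 y ≤ N - 2 * n) :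
    (∀ i j, bondExcess r0 v2 x i j = 0) ∧ ∀ i j k, angleEnergy r0 v3 x i j k = 0 := by
  have hfin := hx.hasFiniteEnergy h2 hy hyfin
  obtain ⟨N, hN, hbonds⟩ := hx.exists_ncard_edgeSet_bondGraph_add_le h2 h3 hε hε' hr0 hfin
  have hle := (hx.realEnergy_le h2 hy hyfin).trans (hyE N hN)
  have hbalance := sum_bondExcess_add_sum_angleEnergy (r0 := r0) (v2 := v2) (v3 := v3) (x := x)
  have hexcess : ∀ i, 0 ≤ bondExcess r0 v2 x i := fun i j => hfin.bondExcess_nonneg h2 i j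
  have hangle : ∀ i j, 0 ≤ angleEnergy r0 v3 x i j := fun i j k => angleEnergy_nonneg h3 i j k
  have hexcess' : 0 ≤ fun i => ∑ j, bondExcess r0 v2 x i j := fun i =>
    Fintype.sum_nonneg (hexcess i)
  have hangle' : ∀ i, 0 ≤ fun j => ∑ k, angleEnergy r0 v3 x i j k := fun i j =>
    Fintype.sum_nonneg (hangle i j)
  have hangle'' : 0 ≤ fun i => ∑ j, ∑ k, angleEnergy r0 v3 x i j k := fun i =>
    Fintype.sum_nonneg (hangle' i)
  have hexcess_sum := Fintype.sum_nonneg hexcess'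
  have hangle_sum := Fintype.sum_nonneg hangle''
  constructor
  · intro i
    have h := (Fintype.sum_eq_zero_iff_of_nonneg hexcess').1 (by linarith)
    exact congr_fun ((Fintype.sum_eq_zero_iff_of_nonneg (hexcess i)).1 (congr_fun h i))
  · intro i j
    have h := (Fintype.sum_eq_zero_iff_of_nonneg hangle'').1 (by linarith)
    have h' := (Fintype.sum_eq_zero_iff_of_nonneg (hangle' i)).1 (congr_fun h i)
    exact congr_fun ((Fintype.sum_eq_zero_iff_of_nonneg (hangle i j)).1 (congr_fun h' j))

lemma isExact (hx : IsMinimizer r0 v2 v3 x) (h2 : V2Hyp ε r0 v2) (h3 : V3Hyp ε v3) (hε : 0 < ε)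
    (hε' : ε < 1 / 100) (hr0 : 0 ≤ r0) (hr : r0 < √2) (hn : 1 ≤ n) :
    IsExact (fun i => toC (x i)) (bondGraph r0 x) := by
  obtain ⟨y, hy, hyfin, hyE⟩ := exists_realEnergy_le h2 h3 hr hn
  obtain ⟨hexcess, hangle⟩ := hx.bondExcess_eq_zero_and_angleEnergy_eq_zero h2 h3 hε hε' hr0 hy
    hyfin hyE
  have hnorm : ∀ {i j}, (bondGraph r0 x).Adj i j → ‖toC (x j) - toC (x i)‖ = 1 := fun hij =>
    (norm_toC_sub _ _).trans ((hx.hasFiniteEnergy h2 hy hyfin).dist_eq_one_of_bondExcess_eq_zero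
      h2 hij (hexcess _ _))
  refine ⟨toC.injective.comp hx.1, hnorm, fun i j hj k hk hjk => ?_, fun N hN => ?_⟩
  · have h := angleEnergy_eq_of_adj (v3 := v3) hj hk hjk
    rw [hangle, eq_comm, h3.cwAngle_sub_eq_zero_iff (hx.1.ne hj.1) (hx.1.ne hk.1)] at h
    rwa [dir, dir, NormedSpace.normalize_eq_self_of_norm_eq_one (hnorm hj),
      NormedSpace.normalize_eq_self_of_norm_eq_one (hnorm hk)] at h
  · rw [Nat.card_fin] at hN ⊢
    have hbalance := sum_bondExcess_add_sum_angleEnergy (r0 := r0) (v2 := v2) (v3 := v3) (x := x)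
    simp only [hexcess, hangle, Finset.sum_const_zero, add_zero] at hbalance
    have hle := (hx.realEnergy_le h2 hy hyfin).trans (hyE N hN)
    have : (2 * n : ℝ) ≤ (bondGraph r0 x).edgeSet.ncard + N := by linarith
    exact_mod_cast this

end IsMinimizer

end Minimizer

/-! ### Rectangles and squares -/

/-- The lattice rectangle with `p` columns and `q` rows whose lower left corner is `(1, 1)`. -/
def rectangle (p q : ℕ) : Finset (ℤ × ℤ) := Finset.Icc 1 (p : ℤ) ×ˢ Finset.Icc 1 (q : ℤ)

section Rectangle

variable {ι : Type*} {z : ι → ℂ} {G : SimpleGraph ι}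

/-- The points without a point directly to their right meet every row. -/
lemma card_filter_step_add_card_image_le [Fintype ι] {f g : ι → ℤ}
    (hfg : Function.Injective fun i => (f i, g i)) :
    (Finset.univ.filter fun d : ι × ι => f d.2 = f d.1 + 1 ∧ g d.2 = g d.1).card +
      (Finset.univ.image g).card ≤ Fintype.card ι := by
  classical
  set s : Finset ι := Finset.univ.filter fun i => ∃ j, f j = f i + 1 ∧ g j = g i
  rw [← s.card_add_card_compl]
  refine Nat.add_le_add (Finset.card_le_card_of_injOn Prod.fst (fun d hd => ?_) ?_)
    ((Finset.card_le_card fun b hb => ?_).trans (Finset.card_image_le (s := sᶜ) (f := g)))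
  · exact Finset.mem_filter.2 ⟨Finset.mem_univ _, d.2, (Finset.mem_filter.1 hd).2⟩
  · rintro ⟨i, j⟩ hij ⟨i', j'⟩ hij' rfl
    obtain ⟨hf, hg⟩ : f j = f i + 1 ∧ g j = g i := by simpa using hij
    obtain ⟨hf', hg'⟩ : f j' = f i + 1 ∧ g j' = g i := by simpa using hij'
    rw [hfg (Prod.ext (hf.trans hf'.symm) (hg.trans hg'.symm) : (f j, g j) = (f j', g j'))]
  · obtain ⟨i, -, rfl⟩ := Finset.mem_image.1 hb
    obtain ⟨k, hk, hmax⟩ := Finset.exists_max_image (Finset.univ.filter fun j => g j = g i) f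
      ⟨i, by simp⟩
    rw [Finset.mem_filter] at hk
    refine Finset.mem_image.2 ⟨k, ?_, hk.2⟩
    simp only [s, Finset.mem_compl, Finset.mem_filter, Finset.mem_univ, true_and]
    rintro ⟨j, hf, hg⟩
    have := hmax j (Finset.mem_filter.2 ⟨Finset.mem_univ _, hg.trans hk.2⟩)
    omega

lemma re_im_step_of_norm_eq_one {w : GaussianInt} (hw : w.norm = 1) :
    (w.re = 1 ∧ w.im = 0) ∨ (w.re = -1 ∧ w.im = 0) ∨ (w.re = 0 ∧ w.im = 1) ∨
      (w.re = 0 ∧ w.im = -1) := by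
  rw [Zsqrtd.norm_def] at hw
  have hre : |w.re| ≤ 1 := (sq_le_one_iff_abs_le_one _).1 (by nlinarith [sq_nonneg w.im])
  have him : |w.im| ≤ 1 := (sq_le_one_iff_abs_le_one _).1 (by nlinarith [sq_nonneg w.re])
  obtain ⟨hre₁, hre₂⟩ := abs_le.1 hre
  obtain ⟨him₁, him₂⟩ := abs_le.1 him
  interval_cases w.re <;> interval_cases w.im <;> simp_all

lemma ncard_edgeSet_add_card_image_le [Fintype ι] {g : ι → GaussianInt}
    (hg : Function.Injective g) (hG : ∀ i j, G.Adj i j → (g j - g i).norm = 1) :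
    G.edgeSet.ncard + (Finset.univ.image fun i => (g i).re).card +
      (Finset.univ.image fun i => (g i).im).card ≤ 2 * Fintype.card ι := by
  classical
  set f : ι → ℤ := fun i => (g i).re
  set h : ι → ℤ := fun i => (g i).im
  have hrow := card_filter_step_add_card_image_le (f := f) (g := h) fun i j hij =>
    hg (Zsqrtd.ext (Prod.ext_iff.1 hij).1 (Prod.ext_iff.1 hij).2)
  have hcolumn := card_filter_step_add_card_image_le (f := h) (g := f) fun i j hij =>
    hg (Zsqrtd.ext (Prod.ext_iff.1 hij).2 (Prod.ext_iff.1 hij).1)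
  set D := Finset.univ.filter fun d : ι × ι => f d.2 = f d.1 + 1 ∧ h d.2 = h d.1
  set E := Finset.univ.filter fun d : ι × ι => h d.2 = h d.1 + 1 ∧ f d.2 = f d.1
  have hsub : G.edgeFinset ⊆ (D ∪ E).image fun d => s(d.1, d.2) := fun e he => by
    induction e with
    | _ i j =>
      have hstep := re_im_step_of_norm_eq_one (hG i j (SimpleGraph.mem_edgeFinset.1 he))
      rw [Zsqrtd.re_sub, Zsqrtd.im_sub] at hstep
      have hmem : (i, j) ∈ D ∪ E ∨ (j, i) ∈ D ∪ E := by
        simp only [D, E, f, h, Finset.mem_union, Finset.mem_filter, Finset.mem_univ, true_and]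
        omega
      rcases hmem with hij | hji
      · exact Finset.mem_image.2 ⟨_, hij, rfl⟩
      · exact Finset.mem_image.2 ⟨_, hji, Sym2.eq_swap⟩
  have hcard := (Finset.card_le_card hsub).trans
    (Finset.card_image_le.trans (Finset.card_union_le D E))
  rw [← SimpleGraph.coe_edgeFinset, Set.ncard_coe_finset]
  omega

lemma exists_sub_mem_Icc_card_image [Fintype ι] (hG : G.Connected) {f : ι → ℤ}
    (hf : ∀ i j, G.Adj i j → f j ≤ f i + 1) :
    ∃ m : ℤ, ∀ i, f i - m ∈ Finset.Icc 1 ((Finset.univ.image f).card : ℤ) := by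
  have := hG.nonempty
  obtain ⟨a, -, ha⟩ := Finset.exists_min_image Finset.univ f Finset.univ_nonempty
  obtain ⟨b, -, hb⟩ := Finset.exists_max_image Finset.univ f Finset.univ_nonempty
  have hsub : Finset.Icc (f a) (f b) ⊆ Finset.univ.image f := fun m hm => by
    rw [Finset.mem_Icc] at hm
    by_contra hmem
    have hne : ∀ i, f i ≠ m := fun i hi => hmem (Finset.mem_image.2 ⟨i, Finset.mem_univ i, hi⟩)
    have hlt : ∀ i, Relation.ReflTransGen G.Adj a i → f i < m := fun i hi => by
      induction hi with
      | refl => exact lt_of_le_of_ne hm.1 (hne a)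
      | tail _ hij ih =>
        exact lt_of_le_of_ne ((hf _ _ hij).trans ih) (hne _)
    exact hm.2.not_gt (hlt b ((G.reachable_iff_reflTransGen a b).1 (hG a b)))
  have hcard := Finset.card_le_card hsub
  rw [Int.card_Icc] at hcard
  refine ⟨f a - 1, fun i => Finset.mem_Icc.2 ?_⟩
  have hmin := ha i (Finset.mem_univ i)
  have hmax := hb i (Finset.mem_univ i)
  omega

theorem IsExact.exists_rectangle [Finite ι] [Nonempty ι] (h : IsExact z G) :
    ∃ (u c : ℂ) (g : ι → GaussianInt) (p q : ℕ), ‖u‖ = 1 ∧ (∀ i, z i = c + u * g i) ∧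
      (∀ i, ((g i).re, (g i).im) ∈ rectangle p q) ∧
      ∀ N : ℕ, 4 * Nat.card ι ≤ N ^ 2 → p + q ≤ N := by
  have := Fintype.ofFinite ι
  obtain ⟨u, c, g, hu, hz⟩ := h.exists_lattice
  have hg : Function.Injective g := fun i j hij => h.injective (by rw [hz i, hz j, hij])
  have hG : ∀ i j, G.Adj i j → (g j - g i).norm = 1 := fun i j hij => by
    have hnorm := h.norm_sub hij
    rwa [hz, hz, add_sub_add_left_eq_sub, ← mul_sub, norm_mul, hu, one_mul, ← map_sub,
      norm_toComplex_eq_one_iff] at hnorm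
  have hstep := fun i j hij => re_im_step_of_norm_eq_one (hG i j hij)
  simp only [Zsqrtd.re_sub, Zsqrtd.im_sub] at hstep
  obtain ⟨m, hm⟩ := exists_sub_mem_Icc_card_image h.connected (f := fun i => (g i).re)
    fun i j hij => by have := hstep i j hij; omega
  obtain ⟨l, hl⟩ := exists_sub_mem_Icc_card_image h.connected (f := fun i => (g i).im)
    fun i j hij => by have := hstep i j hij; omega
  refine ⟨u, c + u * ((⟨m, l⟩ : GaussianInt) : ℂ), fun i => g i - ⟨m, l⟩, _, _, hu, fun i => ?_,
    fun i => Finset.mem_product.2 ⟨hm i, hl i⟩, fun N hN => ?_⟩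
  · rw [hz, map_sub]
    ring
  · have hmax := h.two_mul_card_le N hN
    have hmin := ncard_edgeSet_add_card_image_le hg hG
    rw [Nat.card_eq_fintype_card] at hmax
    omega

end Rectangle

section Square

variable {t : ℝ} {p q m n : ℕ} {S T : Finset (ℤ × ℤ)}

lemma side_le {p q : ℝ} (ht : 0 ≤ t) (hpq : p + q < 2 * t ^ 2 + 1) (hp : 0 ≤ p) (hq : 0 ≤ q)
    (h : t ^ 4 ≤ p * q) : p ≤ t ^ 2 + t + 1 := by
  have hsum : (p + q) ^ 2 ≤ (2 * t ^ 2 + 1) ^ 2 := pow_le_pow_left₀ (by positivity) hpq.le 2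
  have hdiff : p - q ≤ 2 * t + 1 := abs_le_of_sq_le_sq' (by nlinarith) (by positivity) |>.2
  linarith

lemma card_rectangle (p q : ℕ) : (rectangle p q).card = p * q := by
  simp [rectangle]

lemma card_rectangle_sdiff_le (p q m : ℕ) :
    (rectangle p q \ rectangle m m).card ≤ (p - m) * q + p * (q - m) := by
  have hsub : rectangle p q \ rectangle m m ⊆ Finset.Ioc (m : ℤ) p ×ˢ Finset.Icc 1 (q : ℤ) ∪
      Finset.Icc 1 (p : ℤ) ×ˢ Finset.Ioc (m : ℤ) q := fun d hd => by
    simp only [rectangle, Finset.mem_sdiff, Finset.mem_product, Finset.mem_Icc, Finset.mem_union,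
      Finset.mem_Ioc] at hd ⊢
    omega
  simpa using (Finset.card_le_card hsub).trans (Finset.card_union_le _ _)

lemma card_symmDiff_le_add_two_mul (S T : Finset (ℤ × ℤ)) :
    ((T ∆ S).card : ℝ) ≤ S.card - T.card + 2 * (T \ S).card := by
  have hunion : (T ∆ S).card ≤ (T \ S).card + (S \ T).card := Finset.card_union_le _ _
  have hS := Finset.card_sdiff_add_card_inter S T
  have hT := Finset.card_sdiff_add_card_inter T S
  rw [Finset.inter_comm] at hT
  have : (T ∆ S).card + T.card ≤ S.card + 2 * (T \ S).card := by omega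
  have : ((T ∆ S).card + T.card : ℝ) ≤ S.card + 2 * (T \ S).card := by exact_mod_cast this
  linarith

lemma card_sdiff_square_le (ht : 1 ≤ t) (hT : T ⊆ rectangle p q) (hcard : (T.card : ℝ) = t ^ 4)
    (hpq : (p + q : ℝ) < 2 * t ^ 2 + 1) (hm : t ^ 2 ≤ m) :
    ((T \ rectangle m m).card : ℝ) ≤ 12 * t ^ 3 := by
  have harea : t ^ 4 ≤ (p : ℝ) * q := by
    rw [← hcard]
    exact_mod_cast card_rectangle p q ▸ Finset.card_le_card hT
  have hp : (p : ℝ) ≤ t ^ 2 + t + 1 :=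
    side_le (by positivity) hpq p.cast_nonneg q.cast_nonneg harea
  have hq : (q : ℝ) ≤ t ^ 2 + t + 1 :=
    side_le (by positivity) (by linarith) q.cast_nonneg p.cast_nonneg (by linarith)
  have hexcess : ∀ {k : ℕ}, (k : ℝ) ≤ t ^ 2 + t + 1 → ((k - m : ℕ) : ℝ) ≤ 2 * t := by
    intro k hk
    rcases le_total m k with h | h
    · rw [Nat.cast_sub h]
      linarith
    · rw [Nat.sub_eq_zero_of_le h, Nat.cast_zero]
      positivity
  have hside : t ^ 2 + t + 1 ≤ 3 * t ^ 2 := by nlinarith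
  calc ((T \ rectangle m m).card : ℝ)
      ≤ ((p - m) * q + p * (q - m) : ℕ) := Nat.cast_le.2 <|
        (Finset.card_le_card (Finset.sdiff_subset_sdiff hT subset_rfl)).trans
          (card_rectangle_sdiff_le p q m)
    _ = (p - m : ℕ) * q + p * (q - m : ℕ) := by push_cast; rfl
    _ ≤ 2 * t * (3 * t ^ 2) + 3 * t ^ 2 * (2 * t) := by
        gcongr
        · exact hexcess hp
        · exact hq.trans hside
        · exact hp.trans hside
        · exact hexcess hq
    _ = 12 * t ^ 3 := by ring

lemma card_symmDiff_square_le (ht : 1 ≤ t) (hT : T ⊆ rectangle p q)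
    (hcard : (T.card : ℝ) = t ^ 4) (hpq : (p + q : ℝ) < 2 * t ^ 2 + 1) (hm : t ^ 2 ≤ m)
    (hm' : (m : ℝ) < t ^ 2 + 1) : ((T ∆ rectangle m m).card : ℝ) ≤ 27 * t ^ 3 := by
  have hsymm := card_symmDiff_le_add_two_mul (rectangle m m) T
  have hsdiff := card_sdiff_square_le ht hT hcard hpq hm
  have harea : (m : ℝ) * m - t ^ 4 ≤ 3 * t ^ 3 := by
    have : (m : ℝ) * m ≤ (t ^ 2 + 1) * (t ^ 2 + 1) := by gcongr
    nlinarith [pow_le_pow_right₀ ht (show 2 ≤ 3 by norm_num), one_le_pow₀ ht (n := 3)]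
  rw [card_rectangle, hcard, Nat.cast_mul] at hsymm
  linarith

lemma card_symmDiff_square_le_rpow (hT : T ⊆ rectangle p q) (hTn : T.Nonempty)
    (hN : ∀ N : ℕ, 4 * T.card ≤ N ^ 2 → p + q ≤ N) :
    ((T ∆ rectangle ⌈√T.card⌉₊ ⌈√T.card⌉₊).card : ℝ) ≤ 27 * (T.card : ℝ) ^ ((3 : ℝ) / 4) := by
  set t : ℝ := (T.card : ℝ) ^ ((1 : ℝ) / 4)
  have ht : 1 ≤ t := Real.one_le_rpow (by exact_mod_cast hTn.card_pos) (by norm_num)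
  have hpow : ∀ k : ℕ, t ^ k = (T.card : ℝ) ^ ((k : ℝ) / 4) := fun k => by
    rw [← Real.rpow_natCast, ← Real.rpow_mul (by positivity)]
    ring_nf
  have ht4 : t ^ 4 = T.card := by rw [hpow]; norm_num
  have ht3 : t ^ 3 = (T.card : ℝ) ^ ((3 : ℝ) / 4) := by rw [hpow]; norm_num
  have ht2 : t ^ 2 = √T.card := by rw [hpow, Real.sqrt_eq_rpow]; norm_num
  have hceil : 4 * T.card ≤ ⌈2 * t ^ 2⌉₊ ^ 2 := by
    have : (2 * t ^ 2) ^ 2 ≤ (⌈2 * t ^ 2⌉₊ : ℝ) ^ 2 := by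
      gcongr
      exact Nat.le_ceil _
    have : (4 * T.card : ℝ) ≤ (⌈2 * t ^ 2⌉₊ : ℝ) ^ 2 := by linarith
    exact_mod_cast this
  have hpq : (p + q : ℝ) ≤ ⌈2 * t ^ 2⌉₊ := by exact_mod_cast hN _ hceil
  rw [← ht3, ← ht2]
  exact card_symmDiff_square_le ht hT ht4.symm
    (hpq.trans_lt (Nat.ceil_lt_add_one (by positivity))) (Nat.le_ceil _)
    (Nat.ceil_lt_add_one (by positivity))

end Square

section RigidMotion

variable {n : ℕ}

lemma exists_isometryEquiv_eq_latticePoint {u : ℂ} (hu : ‖u‖ = 1) (c : ℂ) :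
    ∃ R : Pt ≃ᵢ Pt, ∀ p (g : GaussianInt), toC p = c + u * g → R p = latticePoint g := by
  let E : ℂ ≃ᵢ ℂ := (rotation ⟨u, mem_sphere_zero_iff_norm.2 hu⟩).toIsometryEquiv.trans
    (IsometryEquiv.addLeft c)
  refine ⟨(toC.toIsometryEquiv.trans E.symm).trans toC.symm.toIsometryEquiv, fun p g h => ?_⟩
  have hE : E.symm (toC p) = g := by
    rw [h]
    exact E.symm_apply_apply g
  exact congr_arg toC.symm hE

lemma latticePoint_eq_iff {a b : ℤ} {p : Pt} : latticePoint ⟨a, b⟩ = p ↔ p 0 = a ∧ p 1 = b := by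
  rw [← toC.injective.eq_iff, toC_latticePoint, toC_apply, Complex.ext_iff]
  simp [eq_comm]

lemma Sn_eq_image_rectangle (n : ℕ) :
    Sn n = (fun d : ℤ × ℤ => latticePoint ⟨d.1, d.2⟩) '' rectangle ⌈√n⌉₊ ⌈√n⌉₊ := by
  ext p
  simp only [Sn, Set.mem_ofPred_eq, Set.mem_image, Finset.mem_coe, rectangle, Finset.mem_product,
    Finset.mem_Icc, Prod.exists, latticePoint_eq_iff, Int.natCast_ceil_eq_ceil (Real.sqrt_nonneg n),
    and_assoc]

theorem IsExact.exists_isometryEquiv_ncard_le {G : SimpleGraph (Fin n)} {x : Fin n → Pt}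
    (hn : 1 ≤ n) (h : IsExact (fun i => toC (x i)) G) :
    ∃ R : Pt ≃ᵢ Pt,
      (((R '' Set.range x) ∆ Sn n).ncard : ℝ) ≤ 27 * (n : ℝ) ^ ((3 : ℝ) / 4) := by
  classical
  have : Nonempty (Fin n) := ⟨⟨0, hn⟩⟩
  obtain ⟨u, c, g, p, q, hu, hx, hg, hN⟩ := h.exists_rectangle
  obtain ⟨R, hR⟩ := exists_isometryEquiv_eq_latticePoint hu c
  set T : Finset (ℤ × ℤ) := Finset.univ.image fun i => ((g i).re, (g i).im)
  have hinj : Function.Injective g := fun i j hij => h.injective (by simp only [hx, hij])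
  have hcard : T.card = n := by
    rw [Finset.card_image_of_injective, Finset.card_univ, Fintype.card_fin]
    exact fun i j hij => hinj (Zsqrtd.ext (Prod.ext_iff.1 hij).1 (Prod.ext_iff.1 hij).2)
  have himage : R '' Set.range x = (fun d : ℤ × ℤ => latticePoint ⟨d.1, d.2⟩) '' T := by
    rw [Finset.coe_image, Finset.coe_univ, Set.image_univ, ← Set.range_comp, ← Set.range_comp]
    exact congr_arg Set.range (funext fun i => hR (x i) (g i) (hx i))
  have hlattice : Function.Injective fun d : ℤ × ℤ => latticePoint ⟨d.1, d.2⟩ := fun d e hde =>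
    Prod.ext_iff.2 (Zsqrtd.ext_iff.1 (latticePoint_injective hde))
  have hmain := card_symmDiff_square_le_rpow (T := T) (p := p) (q := q)
    (Finset.image_subset_iff.2 fun i _ => hg i) (Finset.univ_nonempty.image _)
    (by rwa [hcard, ← Nat.card_fin n])
  refine ⟨R, ?_⟩
  rwa [himage, Sn_eq_image_rectangle, ← Set.image_symmDiff hlattice,
    Set.ncard_image_of_injective _ hlattice, ← Finset.coe_symmDiff, Set.ncard_coe_finset, ← hcard]

end RigidMotion

/-- **The `n^{3/4}`-law.** Ground states differ from the square Wulff shape `S_n` by at most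
`c·n^{3/4}` points, up to a rigid motion. -/
theorem n_three_quarters_law :
    ∃ ε₀ : ℝ, 0 < ε₀ ∧ ε₀ < π / 6 ∧ ∃ c : ℝ, 0 < c ∧
      ∀ ε : ℝ, 0 < ε → ε < ε₀ →
      ∀ r0 : ℝ, 1 < r0 → r0 < Real.sqrt 2 →
      ∀ (v2 : ℝ → EReal) (v3 : ℝ → ℝ), V2Hyp ε r0 v2 → V3Hyp ε v3 →
      ∀ n : ℕ, 1 ≤ n → ∀ x : Fin n → Pt, IsMinimizer r0 v2 v3 x →
      ∃ R : Pt ≃ᵢ Pt,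
        (((R '' Set.range x) ∆ Sn n).ncard : ℝ) ≤ c * (n : ℝ) ^ ((3 : ℝ) / 4) := by
  refine ⟨1 / 100, by norm_num, by linarith [Real.pi_gt_three], 27, by norm_num, ?_⟩
  intro ε hε hε' r0 hr1 hr v2 v3 h2 h3 n hn x hx
  exact (hx.isExact h2 h3 hε hε' (zero_le_one.trans hr1.le) hr hn).exists_isometryEquiv_ncard_le hn

end
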